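/- arXiv:1811.07735 — 6 statements merged into one kernel-verified Lean document; each statement's English description precedes it below -/
import Mathlib

section
/- Let A, B ∈ ℂ[x,y] be homogeneous of degree 4 without common factor, and suppose D = (∂A/∂x)(∂B/∂y) − (∂A/∂y)(∂B/∂x) = c·ℓ₁ℓ₂ℓ₃ℓ₄³ for some c ∈ ℂ∖{0} and pairwise non-proportional linear forms ℓ₁, ℓ₂, ℓ₃, ℓ₄ each dividing C = xA + yB (i.e. the homogeneous foliation defined by ω = A dx + B dy is convex of type 3·R₁+1·R₃). Then ω is linearly conjugate to ω₅ = y²(6x²+4xy+y²)dx + 3x⁴dy. -/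
open MvPolynomial

noncomputable section

/-- Polynomials in two variables `x = X 0`, `y = X 1` over `ℂ`. -/
abbrev P2 : Type := MvPolynomial (Fin 2) ℂ

/-- The inflection polynomial `D_ω = A_x B_y - A_y B_x` of `ω = A dx + B dy`. -/
def Dpoly (A B : P2) : P2 :=
  pderiv 0 A * pderiv 1 B - pderiv 1 A * pderiv 0 B

/-- The tangent cone `C_ω = xA + yB` of `ω = A dx + B dy`. -/
def Cpoly (A B : P2) : P2 := X 0 * A + X 1 * B

/-- `A` and `B` have no common (non-unit) factor. -/
def NoCommonFactor (A B : P2) : Prop := ∀ p : P2, p ∣ A → p ∣ B → IsUnit p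

/-- Convexity: every linear factor of `D_ω` divides `C_ω`. -/
def IsConvexPair (A B : P2) : Prop :=
  ∀ l : P2, l.IsHomogeneous 1 → l ≠ 0 → l ∣ Dpoly A B → l ∣ Cpoly A B

/-- Composition of a polynomial with the linear map `φ(x,y) = (a₁x + a₂y, a₃x + a₄y)`. -/
def comp2 (a₁ a₂ a₃ a₄ : ℂ) (p : P2) : P2 :=
  aeval ![C a₁ * X 0 + C a₂ * X 1, C a₃ * X 0 + C a₄ * X 1] p

/-- `ω = A dx + B dy` is linearly conjugate to `ω' = A' dx + B' dy`:
`φ*ω = λ ω'` for some `φ ∈ GL₂(ℂ)` and `λ ∈ ℂ \ {0}`. -/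
def LinConj (A B A' B' : P2) : Prop :=
  ∃ a₁ a₂ a₃ a₄ lam : ℂ, a₁ * a₄ - a₂ * a₃ ≠ 0 ∧ lam ≠ 0 ∧
    C a₁ * comp2 a₁ a₂ a₃ a₄ A + C a₃ * comp2 a₁ a₂ a₃ a₄ B = C lam * A' ∧
    C a₂ * comp2 a₁ a₂ a₃ a₄ A + C a₄ * comp2 a₁ a₂ a₃ a₄ B = C lam * B'

/-- ω₁ = y⁴dx − x⁴dy -/
def A1 : P2 := X 1 ^ 4
def B1 : P2 := -X 0 ^ 4
/-- ω₂ = y³(2x−y)dx + x³(x−2y)dy -/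
def A2 : P2 := X 1 ^ 3 * (2 * X 0 - X 1)
def B2 : P2 := X 0 ^ 3 * (X 0 - 2 * X 1)
/-- ω₃ = y²(6x²+4xy+y²)dx − x³(x+4y)dy -/
def A3 : P2 := X 1 ^ 2 * (6 * X 0 ^ 2 + 4 * X 0 * X 1 + X 1 ^ 2)
def B3 : P2 := -(X 0 ^ 3 * (X 0 + 4 * X 1))
/-- ω₄ = y³(4x+y)dx + x³(x+4y)dy -/
def A4 : P2 := X 1 ^ 3 * (4 * X 0 + X 1)
def B4 : P2 := X 0 ^ 3 * (X 0 + 4 * X 1)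
/-- ω₅ = y²(6x²+4xy+y²)dx + 3x⁴dy -/
def A5 : P2 := X 1 ^ 2 * (6 * X 0 ^ 2 + 4 * X 0 * X 1 + X 1 ^ 2)
def B5 : P2 := 3 * X 0 ^ 4


/-- Two polynomials are proportional (one is a constant multiple of the other). -/
def Proportional (l₁ l₂ : P2) : Prop := ∃ t : ℂ, l₁ = C t * l₂ ∨ l₂ = C t * l₁

/-!
In coordinates where `ℓ₄ = x`, the condition `x ∣ C_ω` says `x ∣ B`, so `x ∤ A` and, by Euler's
identity, `x ∤ A_y`. If `B = x^k q` with `k ≥ 1`, then `D_ω ≡ -k x^(k-1) q A_y` modulo `x^k`, so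
each further factor `x` of `D_ω` produces one of `B`: for a linear factor of multiplicity `n` in
degree `n + 1`, this gives `B = β x^(n+1)`. Then `D_ω` is a multiple of `x^n A_y` and
`C_ω = x (A + β x^n y)`, so convexity means that `A_y` divides `A + β x^n y`. The quotient is linear
with `y`-coefficient `1 / (n + 1)`, and Euler's identity turns the divisibility into the equation
`x (A_x - t A_y) = -(n + 1) β x^n y`. Adding a particular solution leaves `A_x = t A_y`, whose
homogeneous solutions are `a (y + t x)^(n + 1)`. The substitution `y ↦ (s - t) x + s y`, with
`a s^n = β / n`, removes all parameters; for `n = 3` the result is `ω₅`, as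
`y² (6x² + 4xy + y²) = (x + y)⁴ - x⁴ - 4x³y`.
-/

section HomogeneousPolynomials

theorem isHomogeneous_right_of_mul {σ R : Type*} [CommRing R] [IsDomain R]
    {p q : MvPolynomial σ R} {m n : ℕ} (hp : p.IsHomogeneous m) (hp0 : p ≠ 0)
    (hpq : (p * q).IsHomogeneous (m + n)) : q.IsHomogeneous n := by
  let _ : GradedAlgebra (homogeneousSubmodule σ R) := MvPolynomial.gradedAlgebra
  have hcomponent := DirectSum.coe_decompose_mul_add_of_left_mem (homogeneousSubmodule σ R)
    (j := n) (b := q) hp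
  rw [DirectSum.decompose_of_mem_same _ hpq] at hcomponent
  rw [mul_left_cancel₀ hp0 hcomponent]
  exact (DirectSum.decompose (homogeneousSubmodule σ R) q n).2

theorem exists_eq_C_of_isHomogeneous_zero {σ R : Type*} [CommSemiring R] {p : MvPolynomial σ R}
    (hp : p.IsHomogeneous 0) : ∃ a, p = C a :=
  ⟨_, totalDegree_eq_zero_iff_eq_C.mp ((totalDegree_zero_iff_isHomogeneous σ).mpr hp)⟩

theorem exists_eq_sum_C_mul_X {σ R : Type*} [Fintype σ] [CommSemiring R] {p : MvPolynomial σ R}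
    (hp : p.IsHomogeneous 1) : ∃ v : σ → R, p = ∑ i, C (v i) * X i := by
  choose v hv using fun i => exists_eq_C_of_isHomogeneous_zero (hp.pderiv (i := i))
  refine ⟨v, ?_⟩
  simpa only [one_smul, hv, mul_comm] using hp.sum_X_mul_pderiv.symm

theorem irreducible_of_isHomogeneous_one {σ K : Type*} [Field K] {p : MvPolynomial σ K}
    (hp : p.IsHomogeneous 1) (hp0 : p ≠ 0) : Irreducible p := by
  refine irreducible_of_totalDegree_eq_one (hp.totalDegree hp0) fun x hx => ?_
  obtain ⟨d, hd⟩ := ne_zero_iff.mp hp0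
  exact (ne_zero_of_dvd_ne_zero hd (hx d)).isUnit

theorem exists_eq_C_mul_of_dvd {σ R : Type*} [CommRing R] [IsDomain R] {p q : MvPolynomial σ R}
    {n : ℕ} (hp : p.IsHomogeneous n) (hq : q.IsHomogeneous n) (hdvd : q ∣ p) :
    ∃ a, p = C a * q := by
  obtain rfl | hq0 := eq_or_ne q 0
  · exact ⟨0, by simpa using hdvd⟩
  · obtain ⟨r, rfl⟩ := hdvd
    obtain ⟨a, rfl⟩ := exists_eq_C_of_isHomogeneous_zero (isHomogeneous_right_of_mul hq hq0 hp)
    exact ⟨a, mul_comm _ _⟩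

theorem pderiv_comm {σ R : Type*} [CommRing R] (i j : σ) (p : MvPolynomial σ R) :
    pderiv i (pderiv j p) = pderiv j (pderiv i p) := by
  classical
  have hbracket : ⁅(pderiv i : Derivation R (MvPolynomial σ R) _), pderiv j⁆ = 0 :=
    derivation_ext fun k => by
      rw [Derivation.commutator_apply, pderiv_X, pderiv_X, Pi.single_apply, Pi.single_apply]
      split_ifs <;> simp
  rw [← sub_eq_zero, ← Derivation.commutator_apply, hbracket, Derivation.zero_apply]

end HomogeneousPolynomials

section OneForms

variable {σ R : Type*} [Fintype σ] [CommSemiring R]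

/-- The pullback `φ*ω` of the polynomial 1-form `ω = ∑ ωᵢ dxᵢ` by the linear map `φ` with
matrix `M`; a 1-form is encoded as the family of its coefficients. -/
def oneFormPullback (M : Matrix σ σ R) (ω : σ → MvPolynomial σ R) (j : σ) : MvPolynomial σ R :=
  ∑ i, C (M i j) * bind₁ M.toMvPolynomial (ω i)

/-- The Jacobian matrix of the coefficients of the polynomial 1-form `∑ ωᵢ dxᵢ`; in two variables
its determinant is the inflection polynomial. -/
def oneFormJacobian (ω : σ → MvPolynomial σ R) : Matrix σ σ (MvPolynomial σ R) :=
  Matrix.of fun i j => pderiv j (ω i)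

theorem pderiv_bind₁ {τ : Type*} (f : σ → MvPolynomial τ R) (p : MvPolynomial σ R) (j : τ) :
    pderiv j (bind₁ f p) = ∑ i, bind₁ f (pderiv i p) * pderiv j (f i) := by
  classical
  induction p using MvPolynomial.induction_on with
  | C a => simp
  | add p q hp hq => simp only [map_add, hp, hq, add_mul, Finset.sum_add_distrib]
  | mul_X p k hp =>
    simp only [map_mul, bind₁_X_right, Derivation.leibniz, smul_eq_mul, hp, map_add, pderiv_X,
      add_mul, Finset.sum_add_distrib, Finset.mul_sum]
    simp [Pi.single_apply, mul_assoc]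

theorem pderiv_toMvPolynomial (M : Matrix σ σ R) (i j : σ) :
    pderiv j (M.toMvPolynomial i) = C (M i j) := by
  classical
  simp [Matrix.toMvPolynomial, ← C_mul_X_eq_monomial, pderiv_X, Pi.single_apply]

theorem bind₁_toMvPolynomial_mul (M N : Matrix σ σ R) (p : MvPolynomial σ R) :
    bind₁ (M * N).toMvPolynomial p = bind₁ N.toMvPolynomial (bind₁ M.toMvPolynomial p) := by
  simp only [bind₁_bind₁, ← Matrix.toMvPolynomial_mul]

theorem oneFormPullback_one [DecidableEq σ] (ω : σ → MvPolynomial σ R) :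
    oneFormPullback 1 ω = ω := by
  funext j
  simp [oneFormPullback, Matrix.one_apply]

theorem oneFormPullback_mul (M N : Matrix σ σ R) (ω : σ → MvPolynomial σ R) :
    oneFormPullback (M * N) ω = oneFormPullback N (oneFormPullback M ω) := by
  funext j
  simp only [oneFormPullback, Matrix.mul_apply, bind₁_toMvPolynomial_mul, map_sum, map_mul,
    bind₁_C_right, Finset.sum_mul, Finset.mul_sum]
  rw [Finset.sum_comm]
  exact Finset.sum_congr rfl fun _ _ => Finset.sum_congr rfl fun _ _ => by ring

theorem isHomogeneous_oneFormPullback (M : Matrix σ σ R) {ω : σ → MvPolynomial σ R} {n : ℕ}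
    (hω : ∀ i, (ω i).IsHomogeneous n) (j : σ) : (oneFormPullback M ω j).IsHomogeneous n :=
  IsHomogeneous.sum _ _ _ fun i _ => IsHomogeneous.C_mul
    (by simpa using (hω i).aeval _ M.toMvPolynomial_isHomogeneous) _

theorem dvd_oneFormPullback (M : Matrix σ σ R) {ω : σ → MvPolynomial σ R} {p : MvPolynomial σ R}
    (hp : ∀ i, p ∣ ω i) (j : σ) : bind₁ M.toMvPolynomial p ∣ oneFormPullback M ω j :=
  Finset.dvd_sum fun i _ => (map_dvd _ (hp i)).mul_left _

theorem sum_X_mul_oneFormPullback (M : Matrix σ σ R) (ω : σ → MvPolynomial σ R) :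
    ∑ j, X j * oneFormPullback M ω j = bind₁ M.toMvPolynomial (∑ i, X i * ω i) := by
  simp only [oneFormPullback, map_sum, map_mul, bind₁_X_right, Finset.mul_sum,
    Matrix.toMvPolynomial, ← C_mul_X_eq_monomial, Finset.sum_mul]
  rw [Finset.sum_comm]
  exact Finset.sum_congr rfl fun _ _ => Finset.sum_congr rfl fun _ _ => by ring

theorem oneFormJacobian_oneFormPullback (M : Matrix σ σ R) (ω : σ → MvPolynomial σ R) :
    oneFormJacobian (oneFormPullback M ω) =
      (M.map C).transpose * (oneFormJacobian ω).map (bind₁ M.toMvPolynomial) * M.map C := by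
  ext1 k j
  simp only [oneFormJacobian, oneFormPullback, Matrix.of_apply, Matrix.mul_apply,
    Matrix.transpose_apply, Matrix.map_apply, map_sum, pderiv_C_mul, pderiv_bind₁,
    pderiv_toMvPolynomial, Finset.mul_sum, Finset.sum_mul, mul_assoc]
  exact Finset.sum_comm

variable {S : Type*} [DecidableEq σ] [CommRing S]

theorem bind₁_toMvPolynomial_injective {M : Matrix σ σ S} (hM : IsUnit M.det) :
    Function.Injective (bind₁ M.toMvPolynomial) :=
  Function.LeftInverse.injective (g := bind₁ M⁻¹.toMvPolynomial) fun p => by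
    rw [← bind₁_toMvPolynomial_mul, Matrix.mul_nonsing_inv M hM, Matrix.toMvPolynomial_one,
      bind₁_X_left, AlgHom.id_apply]

theorem dvd_of_bind₁_dvd_oneFormPullback {M : Matrix σ σ S} (hM : IsUnit M.det)
    {ω : σ → MvPolynomial σ S} {p : MvPolynomial σ S}
    (hp : ∀ j, bind₁ M.toMvPolynomial p ∣ oneFormPullback M ω j) (i : σ) : p ∣ ω i := by
  have hdvd := dvd_oneFormPullback M⁻¹ hp i
  rwa [← bind₁_toMvPolynomial_mul, ← oneFormPullback_mul, Matrix.mul_nonsing_inv M hM,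
    oneFormPullback_one, Matrix.toMvPolynomial_one, bind₁_X_left, AlgHom.id_apply] at hdvd

theorem det_oneFormJacobian_oneFormPullback (M : Matrix σ σ S) (ω : σ → MvPolynomial σ S) :
    (oneFormJacobian (oneFormPullback M ω)).det =
      C (M.det ^ 2) * bind₁ M.toMvPolynomial (oneFormJacobian ω).det := by
  have hdet_C : (M.map (C : S → MvPolynomial σ S)).det = C M.det := (RingHom.map_det C M).symm
  have hdet_bind : ((oneFormJacobian ω).map (bind₁ M.toMvPolynomial)).det =
      bind₁ M.toMvPolynomial (oneFormJacobian ω).det := (AlgHom.map_det _ _).symm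
  rw [oneFormJacobian_oneFormPullback, Matrix.det_mul, Matrix.det_mul, Matrix.det_transpose,
    hdet_C, hdet_bind, map_pow]
  ring

end OneForms

section PlaneForms

theorem comp2_eq_bind₁ (M : Matrix (Fin 2) (Fin 2) ℂ) (p : P2) :
    comp2 (M 0 0) (M 0 1) (M 1 0) (M 1 1) p = bind₁ M.toMvPolynomial p := by
  have hM : M.toMvPolynomial =
      ![C (M 0 0) * X 0 + C (M 0 1) * X 1, C (M 1 0) * X 0 + C (M 1 1) * X 1] := by
    funext i
    fin_cases i <;> simp [Matrix.toMvPolynomial, C_mul_X_eq_monomial]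
  rw [hM]
  rfl

theorem linConj_iff (ω : Fin 2 → P2) (A' B' : P2) :
    LinConj (ω 0) (ω 1) A' B' ↔ ∃ (M : Matrix (Fin 2) (Fin 2) ℂ) (lam : ℂ), M.det ≠ 0 ∧ lam ≠ 0 ∧
      oneFormPullback M ω 0 = C lam * A' ∧ oneFormPullback M ω 1 = C lam * B' := by
  constructor
  · rintro ⟨a₁, a₂, a₃, a₄, lam, hdet, hlam, hA, hB⟩
    refine ⟨!![a₁, a₂; a₃, a₄], lam, by rwa [Matrix.det_fin_two_of], hlam, ?_, ?_⟩
    · simpa [oneFormPullback, ← comp2_eq_bind₁] using hA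
    · simpa [oneFormPullback, ← comp2_eq_bind₁] using hB
  · rintro ⟨M, lam, hdet, hlam, hA, hB⟩
    refine ⟨M 0 0, M 0 1, M 1 0, M 1 1, lam, by rwa [← Matrix.det_fin_two], hlam, ?_, ?_⟩
    · simpa [oneFormPullback, ← comp2_eq_bind₁] using hA
    · simpa [oneFormPullback, ← comp2_eq_bind₁] using hB

theorem linConj_of_linConj_oneFormPullback {M : Matrix (Fin 2) (Fin 2) ℂ} (hM : M.det ≠ 0)
    {ω : Fin 2 → P2} {A' B' : P2}
    (h : LinConj (oneFormPullback M ω 0) (oneFormPullback M ω 1) A' B') :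
    LinConj (ω 0) (ω 1) A' B' := by
  obtain ⟨N, lam, hN, hlam, hA, hB⟩ := (linConj_iff _ _ _).mp h
  rw [← oneFormPullback_mul] at hA hB
  exact (linConj_iff _ _ _).mpr
    ⟨M * N, lam, by simpa only [Matrix.det_mul] using mul_ne_zero hM hN, hlam, hA, hB⟩

theorem Dpoly_oneFormPullback (M : Matrix (Fin 2) (Fin 2) ℂ) (ω : Fin 2 → P2) :
    Dpoly (oneFormPullback M ω 0) (oneFormPullback M ω 1) =
      C (M.det ^ 2) * bind₁ M.toMvPolynomial (Dpoly (ω 0) (ω 1)) := by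
  simpa only [Matrix.det_fin_two] using! det_oneFormJacobian_oneFormPullback M ω

theorem Cpoly_oneFormPullback (M : Matrix (Fin 2) (Fin 2) ℂ) (ω : Fin 2 → P2) :
    Cpoly (oneFormPullback M ω 0) (oneFormPullback M ω 1) =
      bind₁ M.toMvPolynomial (Cpoly (ω 0) (ω 1)) := by
  simpa only [Fin.sum_univ_two] using! sum_X_mul_oneFormPullback M ω

theorem isRelPrime_of_not_proportional {l₁ l₂ : P2} (h₁ : l₁.IsHomogeneous 1)
    (h₂ : l₂.IsHomogeneous 1) (hn₁ : l₁ ≠ 0) (hp : ¬Proportional l₁ l₂) : IsRelPrime l₁ l₂ := by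
  refine (irreducible_of_isHomogeneous_one h₁ hn₁).isRelPrime_iff_not_dvd.mpr fun hdvd => hp ?_
  obtain ⟨t, ht⟩ := exists_eq_C_mul_of_dvd h₂ h₁ hdvd
  exact ⟨t, Or.inr ht⟩

end PlaneForms

section BinaryForms

/-- The coefficients of the 1-form `(a(y + tx)ⁿ⁺¹ - b xⁿ((n + 1)y + tx)) dx + n b xⁿ⁺¹ dy`, the
normal form reached once the linear form of multiplicity `n` in the inflection polynomial is taken
as the coordinate `x`. -/
def inflectionNormalForm {R : Type*} [CommRing R] (n : ℕ) (a b t : R) :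
    Fin 2 → MvPolynomial (Fin 2) R :=
  ![C a * (X 1 + C t * X 0) ^ (n + 1) - C b * X 0 ^ n * (C (n + 1 : R) * X 1 + C t * X 0),
    C (n * b) * X 0 ^ (n + 1)]

theorem X_zero_mul_pderiv_add_X_one_mul_pderiv {R : Type*} [CommSemiring R]
    {p : MvPolynomial (Fin 2) R} {n : ℕ} (hp : p.IsHomogeneous n) :
    X 0 * pderiv 0 p + X 1 * pderiv 1 p = (n : MvPolynomial (Fin 2) R) * p := by
  simpa only [Fin.sum_univ_two, nsmul_eq_mul] using hp.sum_X_mul_pderiv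

variable {K : Type*} [Field K] {A B : MvPolynomial (Fin 2) K} {n : ℕ}

theorem exists_pde_of_pderiv_one_dvd (hA : A.IsHomogeneous (n + 1)) (hn : n ≠ 0)
    (hXA : ¬X 0 ∣ pderiv 1 A) {b : K} (hdvd : pderiv 1 A ∣ A + C b * X 0 ^ n * X 1) :
    ∃ t, X 0 * (pderiv 0 A - C t * pderiv 1 A) = -(C ((n + 1) * b) * X 0 ^ n * X 1) := by
  obtain ⟨Q, hQ⟩ := hdvd
  have hQ_hom : Q.IsHomogeneous 1 := by
    refine isHomogeneous_right_of_mul hA.pderiv (fun h => hXA (h ▸ dvd_zero _)) (hQ ▸ hA.add ?_)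
    exact ((isHomogeneous_X_pow 0 n).C_mul b).mul (isHomogeneous_X K 1)
  obtain ⟨v, rfl⟩ := exists_eq_sum_C_mul_X hQ_hom
  rw [Fin.sum_univ_two] at hQ
  have heuler := X_zero_mul_pderiv_add_X_one_mul_pderiv hA
  push_cast at heuler
  have hv : (n + 1) * v 1 = 1 := by
    by_contra hne
    have hunit : IsUnit (C ((n + 1) * v 1 - 1) : MvPolynomial (Fin 2) K) :=
      (sub_ne_zero.mpr hne).isUnit.map C
    have hdvd : (X 0 : MvPolynomial (Fin 2) K) ∣
        pderiv 1 A * (C ((n + 1) * v 1 - 1) * X 1) := by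
      obtain ⟨q, hq⟩ := dvd_pow_self (X 0 : MvPolynomial (Fin 2) K) hn
      refine ⟨pderiv 0 A + C ((n + 1) * b) * q * X 1 - C ((n + 1) * v 0) * pderiv 1 A, ?_⟩
      simp only [map_mul, map_add, map_sub, map_natCast, map_one]
      linear_combination (n + 1 : MvPolynomial (Fin 2) K) * (C b * X 1 * hq - hQ) - heuler
    have hX : (X 0 : MvPolynomial (Fin 2) K) ∣ X 1 :=
      hunit.dvd_mul_left.mp ((X_prime.dvd_or_dvd hdvd).resolve_left hXA)
    exact zero_ne_one (X_dvd_X.mp hX)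
  refine ⟨(n + 1) * v 0, ?_⟩
  have hC : C (n + 1 : K) * C (v 1) = (1 : MvPolynomial (Fin 2) K) := by
    rw [← map_mul, hv, map_one]
  simp only [map_mul, map_add, map_natCast, map_one] at hC ⊢
  linear_combination heuler + (n + 1 : MvPolynomial (Fin 2) K) * hQ + X 1 * pderiv 1 A * hC

theorem exists_det_eq_one_and_bind₁_eq_X {l : MvPolynomial (Fin 2) K}
    (hl : l.IsHomogeneous 1) (hl0 : l ≠ 0) :
    ∃ M : Matrix (Fin 2) (Fin 2) K, M.det = 1 ∧ bind₁ M.toMvPolynomial l = X 0 := by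
  obtain ⟨v, rfl⟩ := exists_eq_sum_C_mul_X hl
  obtain ⟨a, b, hab⟩ : ∃ a b, v 0 * a + v 1 * b = 1 := by
    by_cases hv : v 0 = 0
    · have hv' : v 1 ≠ 0 := fun hv' => hl0 (by simp [Fin.sum_univ_two, hv, hv'])
      exact ⟨0, (v 1)⁻¹, by simp [hv']⟩
    · exact ⟨(v 0)⁻¹, 0, by simp [hv]⟩
  refine ⟨!![a, -v 1; b, v 0], by rw [Matrix.det_fin_two_of]; linear_combination hab, ?_⟩
  simp only [Fin.sum_univ_two, map_add, map_mul, bind₁_C_right, bind₁_X_right,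
    Matrix.toMvPolynomial, ← C_mul_X_eq_monomial, Matrix.of_apply, Matrix.cons_val',
    Matrix.cons_val_zero, Matrix.cons_val_one, Matrix.cons_val_fin_one, map_neg]
  have hC : (C (v 0) * C a + C (v 1) * C b : MvPolynomial (Fin 2) K) = 1 := by
    simp only [← map_mul, ← map_add, hab, map_one]
  linear_combination X 0 * hC

variable [CharZero K]

theorem X_zero_not_dvd_pderiv_one (hA : A.IsHomogeneous n) (hn : n ≠ 0) (hXA : ¬X 0 ∣ A) :
    ¬X 0 ∣ pderiv 1 A := by
  intro hdvd
  have hdvd' : X 0 ∣ C (n : K) * A := by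
    rw [map_natCast, ← X_zero_mul_pderiv_add_X_one_mul_pderiv hA]
    exact (dvd_mul_right _ _).add (hdvd.mul_left _)
  exact hXA (((Nat.cast_ne_zero.mpr hn).isUnit.map C).dvd_mul_left.mp hdvd')

theorem X_zero_pow_succ_dvd_of_pow_dvd (hXB : X 0 ∣ B) (hXA : ¬X 0 ∣ pderiv 1 A)
    (hD : X 0 ^ n ∣ pderiv 0 A * pderiv 1 B - pderiv 1 A * pderiv 0 B) : X 0 ^ (n + 1) ∣ B := by
  induction n with
  | zero => simpa using hXB
  | succ k ih =>
    obtain ⟨q, rfl⟩ := ih ((pow_dvd_pow _ k.le_succ).trans hD)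
    have hdvd : (X 0 ^ k * X 0 : MvPolynomial (Fin 2) K) ∣
        X 0 ^ k * (pderiv 1 A * (C (k + 1 : K) * q)) := by
      rw [← pow_succ]
      have hmul : (X 0 ^ (k + 1) : MvPolynomial (Fin 2) K) ∣
          X 0 ^ (k + 1) * (pderiv 0 A * pderiv 1 q - pderiv 1 A * pderiv 0 q) :=
        dvd_mul_right _ _
      convert hmul.sub hD using 1
      simp only [Derivation.leibniz, Derivation.leibniz_pow, pderiv_X_self,
        pderiv_X_of_ne zero_ne_one, smul_eq_mul, nsmul_eq_mul, map_add, map_natCast, map_one,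
        Nat.add_sub_cancel]
      push_cast
      ring
    have hdvd_q : X 0 ∣ C (k + 1 : K) * q :=
      (X_prime.dvd_or_dvd
        ((mul_dvd_mul_iff_left (pow_ne_zero k (X_ne_zero 0))).mp hdvd)).resolve_left hXA
    rw [pow_succ]
    exact mul_dvd_mul_left _
      ((k.cast_add_one_ne_zero.isUnit.map C).dvd_mul_left.mp hdvd_q)

theorem eq_C_mul_pow_of_pderiv_zero_eq {t : K} (hA : A.IsHomogeneous n)
    (hpde : pderiv 0 A = C t * pderiv 1 A) : ∃ a, A = C a * (X 1 + C t * X 0) ^ n := by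
  induction n generalizing A with
  | zero => simpa using exists_eq_C_of_isHomogeneous_zero hA
  | succ k ih =>
    have hpde' : pderiv 0 (pderiv 1 A) = C t * pderiv 1 (pderiv 1 A) := by
      rw [pderiv_comm, hpde, pderiv_C_mul]
    obtain ⟨a, ha⟩ := ih hA.pderiv hpde'
    refine ⟨a / (k + 1 : ℕ), ?_⟩
    have hk : ((k + 1 : ℕ) : K) ≠ 0 := Nat.cast_ne_zero.mpr k.succ_ne_zero
    have hC : ((k + 1 : ℕ) : MvPolynomial (Fin 2) K) * C (a / (k + 1 : ℕ)) = C a := by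
      rw [← map_natCast C, ← map_mul, mul_div_cancel₀ _ hk]
    have heuler := X_zero_mul_pderiv_add_X_one_mul_pderiv hA
    rw [hpde, ha] at heuler
    refine mul_left_cancel₀ (Nat.cast_ne_zero.mpr k.succ_ne_zero) ?_
    linear_combination -heuler - (X 1 + C t * X 0) ^ (k + 1) * hC

theorem exists_eq_inflectionNormalForm_of_pde {b t : K} (hA : A.IsHomogeneous (n + 1))
    (hpde : X 0 * (pderiv 0 A - C t * pderiv 1 A) = -(C ((n + 1) * (n * b)) * X 0 ^ n * X 1)) :
    ∃ a, A = inflectionNormalForm n a b t 0 := by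
  have hX_pow : (X 0 * pderiv 0 (X 0 ^ n) : MvPolynomial (Fin 2) K) = C (n : K) * X 0 ^ n := by
    cases n with
    | zero => simp
    | succ m =>
      rw [Derivation.leibniz_pow, pderiv_X_self, nsmul_eq_mul, smul_eq_mul, map_natCast,
        Nat.add_sub_cancel, pow_succ]
      ring
  have hhom : (C b * X 0 ^ n * (C (n + 1 : K) * X 1 + C t * X 0) :
      MvPolynomial (Fin 2) K).IsHomogeneous (n + 1) :=
    ((isHomogeneous_X_pow 0 n).C_mul b).mul
      (((isHomogeneous_X K 1).C_mul _).add ((isHomogeneous_X K 0).C_mul _))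
  obtain ⟨a, ha⟩ := eq_C_mul_pow_of_pderiv_zero_eq (t := t) (hA.add hhom) <| by
    refine mul_left_cancel₀ (X_ne_zero (0 : Fin 2)) ?_
    have hy : pderiv 1 (X 0 ^ n : MvPolynomial (Fin 2) K) = 0 := by simp [Derivation.leibniz_pow]
    simp only [map_add, Derivation.leibniz, pderiv_C, pderiv_X_self, hy,
      pderiv_X_of_ne zero_ne_one, pderiv_X_of_ne one_ne_zero, smul_eq_mul]
    simp only [map_add, map_mul, map_natCast, map_one] at hpde hX_pow ⊢
    linear_combination hpde + C b * ((n + 1) * X 1 + C t * X 0) * hX_pow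
  exact ⟨a, eq_sub_of_add_eq ha⟩

end BinaryForms

section Classification

variable {A B P : P2} {n : ℕ}

theorem pderiv_one_dvd_add_of_dvd_Cpoly {b : ℂ}
    (hD : Dpoly A (C b * X 0 ^ (n + 1)) = P * X 0 ^ n)
    (hC : P * X 0 ∣ Cpoly A (C b * X 0 ^ (n + 1))) :
    pderiv 1 A ∣ A + C b * X 0 ^ n * X 1 := by
  have hP : P = C (-(n + 1) * b) * pderiv 1 A := by
    refine mul_right_cancel₀ (pow_ne_zero n (X_ne_zero 0)) (hD.symm.trans ?_)
    simp only [Dpoly, pderiv_C_mul, Derivation.leibniz_pow, pderiv_X_self,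
      pderiv_X_of_ne zero_ne_one, Nat.add_sub_cancel, smul_eq_mul, nsmul_eq_mul, Nat.cast_add,
      Nat.cast_one, map_mul, map_add, map_neg, map_natCast, map_one]
    ring
  have hCpoly : Cpoly A (C b * X 0 ^ (n + 1)) = (A + C b * X 0 ^ n * X 1) * X 0 := by
    rw [Cpoly]
    ring
  rw [hCpoly] at hC
  exact (Dvd.intro_left _ hP.symm).trans ((mul_dvd_mul_iff_right (X_ne_zero 0)).mp hC)

theorem exists_eq_inflectionNormalForm (hA : A.IsHomogeneous (n + 1)) (hB : B.IsHomogeneous (n + 1))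
    (hn : n ≠ 0) (hcop : ¬(X 0 ∣ A ∧ X 0 ∣ B)) (hD0 : Dpoly A B ≠ 0)
    (hD : Dpoly A B = P * X 0 ^ n) (hC : P * X 0 ∣ Cpoly A B) :
    ∃ a b t : ℂ, a ≠ 0 ∧ b ≠ 0 ∧
      A = inflectionNormalForm n a b t 0 ∧ B = inflectionNormalForm n a b t 1 := by
  have hX_not_dvd : ¬(X 0 : P2) ∣ X 1 := fun h => zero_ne_one (X_dvd_X.mp h)
  have hXB : X 0 ∣ B := by
    have hdvd : X 0 ∣ X 1 * B := by
      simpa only [Cpoly, add_sub_cancel_left] using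
        (dvd_of_mul_left_dvd hC).sub (dvd_mul_right (X 0) A)
    exact (X_prime.dvd_or_dvd hdvd).resolve_left hX_not_dvd
  have hXA : ¬X 0 ∣ A := fun h => hcop ⟨h, hXB⟩
  have hXA' := X_zero_not_dvd_pderiv_one hA n.succ_ne_zero hXA
  obtain ⟨b', rfl⟩ := exists_eq_C_mul_of_dvd hB (isHomogeneous_X_pow 0 _)
    (X_zero_pow_succ_dvd_of_pow_dvd hXB hXA' (Dvd.intro_left P hD.symm))
  have hb' : b' ≠ 0 := by
    rintro rfl
    simp [Dpoly] at hD0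
  have hn' : (n : ℂ) ≠ 0 := Nat.cast_ne_zero.mpr hn
  obtain ⟨b, rfl⟩ : ∃ b, b' = n * b := ⟨b' / n, (mul_div_cancel₀ _ hn').symm⟩
  obtain ⟨t, hpde⟩ := exists_pde_of_pderiv_one_dvd hA hn hXA'
    (pderiv_one_dvd_add_of_dvd_Cpoly hD hC)
  obtain ⟨a, ha⟩ := exists_eq_inflectionNormalForm_of_pde hA hpde
  refine ⟨a, b, t, ?_, right_ne_zero_of_mul hb', ha, rfl⟩
  rintro rfl
  refine hXA (ha ▸ ?_)
  rw [inflectionNormalForm, Matrix.cons_val_zero, map_zero, zero_mul]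
  exact (dvd_zero _).sub (((dvd_pow_self _ hn).mul_left _).mul_right _)

theorem linConj_inflectionNormalForm {a b : ℂ} (ha : a ≠ 0) (hb : b ≠ 0) (hn : n ≠ 0) (t : ℂ) :
    LinConj (inflectionNormalForm n a b t 0) (inflectionNormalForm n a b t 1)
      ((X 0 + X 1) ^ (n + 1) - X 0 ^ (n + 1) - ((n : P2) + 1) * X 0 ^ n * X 1)
      ((n : P2) * X 0 ^ (n + 1)) := by
  obtain ⟨s, hs⟩ := IsAlgClosed.exists_pow_nat_eq (b / a) (Nat.pos_of_ne_zero hn)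
  have has : a * s ^ n = b := by rw [hs, mul_div_cancel₀ _ ha]
  have hs0 : s ≠ 0 := by
    rintro rfl
    rw [zero_pow hn, mul_zero] at has
    exact hb has.symm
  have hC : (C a * C s ^ n : P2) = C b := by rw [← map_pow, ← map_mul, has]
  have hlin : ((C s - C t) * X 0 + C s * X 1 + C t * X 0 : P2) = C s * (X 0 + X 1) := by ring
  refine ⟨1, 0, s - t, s, a * s ^ (n + 1), by simpa, mul_ne_zero ha (pow_ne_zero _ hs0), ?_, ?_⟩
  · simp only [inflectionNormalForm, comp2, map_add, map_sub, map_mul, map_pow, map_one,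
      map_natCast, map_zero, algHom_C, algebraMap_eq, aeval_X, Matrix.cons_val_zero,
      Matrix.cons_val_one, one_mul, zero_mul, add_zero, hlin, mul_pow]
    linear_combination C s * X 0 ^ n * (X 0 + (n + 1) * X 1) * hC
  · simp only [inflectionNormalForm, comp2, map_mul, map_pow, map_one, map_natCast, map_zero,
      algHom_C, algebraMap_eq, aeval_X, Matrix.cons_val_zero, Matrix.cons_val_one, one_mul,
      zero_mul, add_zero, zero_add]
    linear_combination -(C s * n * X 0 ^ (n + 1)) * hC

theorem type_three_R1_one_R3_classification_general {l : P2}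
    (hA : A.IsHomogeneous (n + 1)) (hB : B.IsHomogeneous (n + 1)) (hn : n ≠ 0)
    (hl : l.IsHomogeneous 1) (hcop : ¬(l ∣ A ∧ l ∣ B)) (hD0 : Dpoly A B ≠ 0)
    (hD : Dpoly A B = P * l ^ n) (hC : P * l ∣ Cpoly A B) :
    LinConj A B ((X 0 + X 1) ^ (n + 1) - X 0 ^ (n + 1) - ((n : P2) + 1) * X 0 ^ n * X 1)
      ((n : P2) * X 0 ^ (n + 1)) := by
  have hl0 : l ≠ 0 := by
    rintro rfl
    rw [zero_pow hn, mul_zero] at hD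
    exact hD0 hD
  obtain ⟨M, hM, hMl⟩ := exists_det_eq_one_and_bind₁_eq_X hl hl0
  have hM_unit : IsUnit M.det := hM ▸ isUnit_one
  have hω : ∀ i, (![A, B] i).IsHomogeneous (n + 1) := Fin.forall_fin_two.mpr ⟨hA, hB⟩
  have hD' := Dpoly_oneFormPullback M ![A, B]
  have hC' := Cpoly_oneFormPullback M ![A, B]
  have hcop' : ¬(X 0 ∣ oneFormPullback M ![A, B] 0 ∧ X 0 ∣ oneFormPullback M ![A, B] 1) := by
    rintro ⟨hX₀, hX₁⟩
    refine hcop (Fin.forall_fin_two.mp (dvd_of_bind₁_dvd_oneFormPullback (ω := ![A, B]) hM_unit ?_))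
    exact Fin.forall_fin_two.mpr ⟨hMl ▸ hX₀, hMl ▸ hX₁⟩
  simp only [hM, one_pow, map_one, one_mul, Matrix.cons_val_zero, Matrix.cons_val_one] at hD' hC'
  obtain ⟨a, b, t, ha, hb, hA', hB'⟩ := exists_eq_inflectionNormalForm
    (P := bind₁ M.toMvPolynomial P) (isHomogeneous_oneFormPullback M hω 0)
    (isHomogeneous_oneFormPullback M hω 1) hn hcop'
    (by rwa [hD', map_ne_zero_iff _ (bind₁_toMvPolynomial_injective hM_unit)])
    (by rw [hD', hD, map_mul, map_pow, hMl])
    (by simpa only [hC', ← hMl, ← map_mul] using map_dvd _ hC)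
  refine linConj_of_linConj_oneFormPullback (M := M) (ω := ![A, B]) (hM ▸ one_ne_zero) ?_
  rw [hA', hB']
  exact linConj_inflectionNormalForm ha hb hn t

end Classification

/-- If the homogeneous foliation `ω = A dx + B dy` of degree 4 is convex of type `3·R₁+1·R₃`,
then `ω` is linearly conjugate to `ω₅ = y²(6x²+4xy+y²)dx + 3x⁴dy`. -/
theorem type_three_R1_one_R3_classification
    (A B : P2) (hA : A.IsHomogeneous 4) (hB : B.IsHomogeneous 4)
    (hcop : NoCommonFactor A B)
    (c : ℂ) (hc : c ≠ 0) (l₁ l₂ l₃ l₄ : P2)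
    (h₁ : l₁.IsHomogeneous 1) (h₂ : l₂.IsHomogeneous 1)
    (h₃ : l₃.IsHomogeneous 1) (h₄ : l₄.IsHomogeneous 1)
    (hn₁ : l₁ ≠ 0) (hn₂ : l₂ ≠ 0) (hn₃ : l₃ ≠ 0) (hn₄ : l₄ ≠ 0)
    (hp₁₂ : ¬ Proportional l₁ l₂) (hp₁₃ : ¬ Proportional l₁ l₃)
    (hp₁₄ : ¬ Proportional l₁ l₄) (hp₂₃ : ¬ Proportional l₂ l₃)
    (hp₂₄ : ¬ Proportional l₂ l₄) (hp₃₄ : ¬ Proportional l₃ l₄)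
    (hdvd₁ : l₁ ∣ Cpoly A B) (hdvd₂ : l₂ ∣ Cpoly A B)
    (hdvd₃ : l₃ ∣ Cpoly A B) (hdvd₄ : l₄ ∣ Cpoly A B)
    (hD : Dpoly A B = C c * l₁ * l₂ * l₃ * l₄ ^ 3) :
    LinConj A B A5 B5 := by
  have hr₁₂ := isRelPrime_of_not_proportional h₁ h₂ hn₁ hp₁₂
  have hr₁₃ := isRelPrime_of_not_proportional h₁ h₃ hn₁ hp₁₃
  have hr₁₄ := isRelPrime_of_not_proportional h₁ h₄ hn₁ hp₁₄
  have hr₂₃ := isRelPrime_of_not_proportional h₂ h₃ hn₂ hp₂₃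
  have hr₂₄ := isRelPrime_of_not_proportional h₂ h₄ hn₂ hp₂₄
  have hr₃₄ := isRelPrime_of_not_proportional h₃ h₄ hn₃ hp₃₄
  have hdvd₁₂₃ : l₁ * l₂ * l₃ ∣ Cpoly A B :=
    (hr₁₃.mul_left hr₂₃).mul_dvd (hr₁₂.mul_dvd hdvd₁ hdvd₂) hdvd₃
  have hdvd : l₁ * l₂ * l₃ * l₄ ∣ Cpoly A B :=
    ((hr₁₄.mul_left hr₂₄).mul_left hr₃₄).mul_dvd hdvd₁₂₃ hdvd₄
  have hC_unit : IsUnit (C c : P2) := hc.isUnit.map C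
  have hl₄ : ¬(l₄ ∣ A ∧ l₄ ∣ B) := fun h =>
    (irreducible_of_isHomogeneous_one h₄ hn₄).not_isUnit (hcop l₄ h.1 h.2)
  have hD0 : Dpoly A B ≠ 0 := by simp [hD, hc, hn₁, hn₂, hn₃, hn₄]
  convert type_three_R1_one_R3_classification_general (n := 3) hA hB three_ne_zero h₄ hl₄ hD0 hD
    (by simpa only [mul_assoc] using hC_unit.mul_left_dvd.mpr hdvd) using 1
  · rw [A5]
    push_cast
    ring
  · rw [B5, Nat.cast_ofNat]
end
end

section
/- Let α, a₀, a₁, a₂, b ∈ ℂ with a₂ ≠ 0, α ≠ 0 and α ≠ 1. Define P(z) = a₂z⁴ + a₁z³ + a₀z² + b and Q(z) = a₂z⁴ + a₁z³ + a₀z² + αb. Then the system P(1) = 0, P′(1) = 0, Q(α) = 0, Q′(α) = 0 holds if and only if a₀ = 2a₂α, a₁ = −4a₂(α+1)/3, b = −a₂(2α−1)/3, and α² − α + 1 = 0. -/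
/-!
`P` and `Q` differ only in their constant terms, so both derivatives equal
`z(4a₂z² + 3a₁z + 2a₀)`; having `1` and `α` as zeros, the quadratic factor is `4a₂(z - 1)(z - α)`,
and this fixes `a₀` and `a₁`. Then `P(1) = 0` fixes `b`, and `3Q(α)` becomes
`-a₂α(α - 1)(α² - α + 1)`.
-/

open Polynomial

noncomputable section

/-- `P(z) = a₂z⁴ + a₁z³ + a₀z² + b`. -/
def Ppoly (a₀ a₁ a₂ b : ℂ) : Polynomial ℂ :=
  C a₂ * X ^ 4 + C a₁ * X ^ 3 + C a₀ * X ^ 2 + C b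

/-- `Q(z) = a₂z⁴ + a₁z³ + a₀z² + αb`. -/
def Qpoly (a₀ a₁ a₂ b α : ℂ) : Polynomial ℂ :=
  C a₂ * X ^ 4 + C a₁ * X ^ 3 + C a₀ * X ^ 2 + C (α * b)

/-- The quartic `a₂z⁴ + a₁z³ + a₀z² + c` over an arbitrary semiring; over `ℂ` it is `P` for `c = b`
and `Q` for `c = αb`. -/
def linearFreeQuartic {R : Type*} [Semiring R] (a₀ a₁ a₂ c : R) : R[X] :=
  C a₂ * X ^ 4 + C a₁ * X ^ 3 + C a₀ * X ^ 2 + C c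

theorem eval_linearFreeQuartic {R : Type*} [CommSemiring R] (a₀ a₁ a₂ c z : R) :
    (linearFreeQuartic a₀ a₁ a₂ c).eval z = a₂ * z ^ 4 + a₁ * z ^ 3 + a₀ * z ^ 2 + c := by
  simp [linearFreeQuartic]

theorem eval_derivative_linearFreeQuartic {R : Type*} [CommSemiring R] (a₀ a₁ a₂ c z : R) :
    (derivative (linearFreeQuartic a₀ a₁ a₂ c)).eval z =
      z * (4 * a₂ * z ^ 2 + 3 * a₁ * z + 2 * a₀) := by
  simp only [linearFreeQuartic, derivative_add, derivative_C_mul_X_pow, derivative_C, eval_add,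
    eval_mul, eval_C, eval_pow, eval_X, eval_zero]
  push_cast
  ring

theorem quadratic_eq_zero_and_eq_zero_iff {R : Type*} [CommRing R] [IsCancelMulZero R] {u v : R}
    (huv : u ≠ v) (p q r : R) :
    (p * u ^ 2 + q * u + r = 0 ∧ p * v ^ 2 + q * v + r = 0) ↔
      q = -(p * (u + v)) ∧ r = p * u * v := by
  constructor
  · rintro ⟨hu, hv⟩
    have hq : q = -(p * (u + v)) := by
      apply mul_left_cancel₀ (sub_ne_zero.mpr huv)
      linear_combination hu - hv
    exact ⟨hq, by linear_combination hu - u * hq⟩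
  · rintro ⟨rfl, rfl⟩
    exact ⟨by ring, by ring⟩

section Field

variable {K : Type*} [Field K]

theorem eval_derivative_linearFreeQuartic_eq_zero_iff [NeZero (2 : K)] [NeZero (3 : K)] {u v : K}
    (hu : u ≠ 0) (hv : v ≠ 0) (huv : u ≠ v) (a₀ a₁ a₂ c d : K) :
    ((derivative (linearFreeQuartic a₀ a₁ a₂ c)).eval u = 0 ∧
        (derivative (linearFreeQuartic a₀ a₁ a₂ d)).eval v = 0) ↔
      a₀ = 2 * a₂ * (u * v) ∧ a₁ = -(4 * a₂ * (u + v)) / 3 := by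
  have h2 : (2 : K) ≠ 0 := NeZero.ne 2
  have h3 : (3 : K) ≠ 0 := NeZero.ne 3
  have h_sum : 3 * a₁ = -(4 * a₂ * (u + v)) ↔ a₁ = -(4 * a₂ * (u + v)) / 3 := by
    rw [eq_div_iff h3, mul_comm]
  have h_prod : 2 * a₀ = 4 * a₂ * u * v ↔ a₀ = 2 * a₂ * (u * v) := by
    rw [← mul_right_inj' h2 (b := a₀)]
    ring_nf
  simp only [eval_derivative_linearFreeQuartic, mul_eq_zero, hu, hv, false_or]
  rw [quadratic_eq_zero_and_eq_zero_iff huv, h_sum, h_prod, and_comm]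

theorem eval_linearFreeQuartic_eq_zero_iff_of_critical [NeZero (3 : K)] (a₂ u v c : K) :
    (linearFreeQuartic (2 * a₂ * (u * v)) (-(4 * a₂ * (u + v)) / 3) a₂ c).eval u = 0 ↔
      c = -(a₂ * u ^ 3 * (2 * v - u)) / 3 := by
  have h3 : (3 : K) ≠ 0 := NeZero.ne 3
  have h_value : (linearFreeQuartic (2 * a₂ * (u * v)) (-(4 * a₂ * (u + v)) / 3) a₂ c).eval u =
      c - -(a₂ * u ^ 3 * (2 * v - u)) / 3 := by
    rw [eval_linearFreeQuartic]
    field_simp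
    ring
  rw [h_value, sub_eq_zero]

-- Both sides are candidates for `αb`: the left one comes from `P(1) = 0`, the right one from
-- `Q(α) = 0`.
theorem mul_critical_constant_eq_iff [NeZero (3 : K)] {a₂ α : K} (ha₂ : a₂ ≠ 0) (hα0 : α ≠ 0)
    (hα1 : α ≠ 1) :
    α * (-(a₂ * (2 * α - 1)) / 3) = -(a₂ * α ^ 3 * (2 - α)) / 3 ↔ α ^ 2 - α + 1 = 0 := by
  have h3 : (3 : K) ≠ 0 := NeZero.ne 3
  have h_factor : α * (-(a₂ * (2 * α - 1)) / 3) - -(a₂ * α ^ 3 * (2 - α)) / 3 =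
      -(a₂ * α * (α - 1) / 3) * (α ^ 2 - α + 1) := by
    ring
  have h_coeff : -(a₂ * α * (α - 1) / 3) ≠ 0 :=
    neg_ne_zero.mpr (div_ne_zero (mul_ne_zero (mul_ne_zero ha₂ hα0) (sub_ne_zero.mpr hα1)) h3)
  rw [← sub_eq_zero, h_factor, mul_eq_zero_iff_left h_coeff]

theorem system_solution_general [NeZero (2 : K)] [NeZero (3 : K)] (α a₀ a₁ a₂ b : K)
    (ha₂ : a₂ ≠ 0) (hα0 : α ≠ 0) (hα1 : α ≠ 1) :
    ((linearFreeQuartic a₀ a₁ a₂ b).eval 1 = 0 ∧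
     (derivative (linearFreeQuartic a₀ a₁ a₂ b)).eval 1 = 0 ∧
     (linearFreeQuartic a₀ a₁ a₂ (α * b)).eval α = 0 ∧
     (derivative (linearFreeQuartic a₀ a₁ a₂ (α * b))).eval α = 0) ↔
    (a₀ = 2 * a₂ * α ∧ a₁ = -(4 * a₂ * (α + 1)) / 3 ∧
     b = -(a₂ * (2 * α - 1)) / 3 ∧ α ^ 2 - α + 1 = 0) := by
  have h_critical := eval_derivative_linearFreeQuartic_eq_zero_iff hα0 one_ne_zero hα1
    a₀ a₁ a₂ (α * b) b
  have h_root_α := eval_linearFreeQuartic_eq_zero_iff_of_critical a₂ α 1 (α * b)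
  have h_root_one := eval_linearFreeQuartic_eq_zero_iff_of_critical a₂ 1 α b
  rw [one_mul, add_comm 1 α] at h_root_one
  simp only [mul_one, one_pow] at h_critical h_root_α h_root_one
  constructor
  · rintro ⟨hP, hP', hQ, hQ'⟩
    obtain ⟨rfl, rfl⟩ := h_critical.mp ⟨hQ', hP'⟩
    obtain rfl := h_root_one.mp hP
    exact ⟨rfl, rfl, rfl, (mul_critical_constant_eq_iff ha₂ hα0 hα1).mp (h_root_α.mp hQ)⟩
  · rintro ⟨rfl, rfl, rfl, hα⟩
    obtain ⟨hQ', hP'⟩ := h_critical.mpr ⟨rfl, rfl⟩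
    exact ⟨h_root_one.mpr rfl, hP',
      h_root_α.mpr ((mul_critical_constant_eq_iff ha₂ hα0 hα1).mpr hα), hQ'⟩

end Field

/-- The system `P(1) = P′(1) = Q(α) = Q′(α) = 0` holds iff
`a₀ = 2a₂α`, `a₁ = −4a₂(α+1)/3`, `b = −a₂(2α−1)/3` and `α² − α + 1 = 0`. -/
theorem system_solution (α a₀ a₁ a₂ b : ℂ) (ha₂ : a₂ ≠ 0) (hα0 : α ≠ 0) (hα1 : α ≠ 1) :
    ((Ppoly a₀ a₁ a₂ b).eval 1 = 0 ∧
     (derivative (Ppoly a₀ a₁ a₂ b)).eval 1 = 0 ∧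
     (Qpoly a₀ a₁ a₂ b α).eval α = 0 ∧
     (derivative (Qpoly a₀ a₁ a₂ b α)).eval α = 0) ↔
    (a₀ = 2 * a₂ * α ∧ a₁ = -(4 * a₂ * (α + 1)) / 3 ∧
     b = -(a₂ * (2 * α - 1)) / 3 ∧ α ^ 2 - α + 1 = 0) :=
  system_solution_general α a₀ a₁ a₂ b ha₂ hα0 hα1
end
end

section
/- Let c ∈ ℂ satisfy 16c² + 12c + 1 = 0 (equivalently c = −3/8 ± √5/8). Set ω = y³(2y + 3cy − 4cx − 3x)dx + x³(y + cx)dy and let φ be the linear map φ(x,y) = (2x, 8cy). Then ω₄ := y³(4x+y)dx + x³(x+4y)dy satisfies ω₄ = ((3c+2)/2)·φ*ω, where φ*ω = (A∘φ)·d(2x) + (B∘φ)·d(8cy) for ω = A dx + B dy. -/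
open MvPolynomial

noncomputable section

/-- Pullback of the 1-form `ω = A dx + B dy` by the polynomial map `φ = (φ₁, φ₂)`:
`φ*ω = (A∘φ)dφ₁ + (B∘φ)dφ₂`, returned as the pair of its `dx`- and `dy`-coefficients. -/
def pullback (φ₁ φ₂ A B : P2) : P2 × P2 :=
  (aeval ![φ₁, φ₂] A * pderiv 0 φ₁ + aeval ![φ₁, φ₂] B * pderiv 0 φ₂,
   aeval ![φ₁, φ₂] A * pderiv 1 φ₁ + aeval ![φ₁, φ₂] B * pderiv 1 φ₂)

/-!
A diagonal linear map preserves the shape `y³(px + qy)dx + x³(rx + sy)dy` and only rescales the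
four coefficients. For `ω` and `φ = (2x, 8cy)` the pulled-back `dy`-part is `128c²x³(x + 4y)dy` for
every `c`. The `dx`-part is `128c²y³(4x + y)dx` because `16c² + 12c + 1 = 0` gives
`-4c(4c + 3) = 1` and `64c²(3c + 2) = 1`. Hence `φ*ω = 128c²·ω₄`, and the second identity says that
`(3c + 2)/2` is the inverse of `128c²`.
-/

theorem sixtyfour_mul_sq_mul_eq_one {R : Type*} [CommRing R] {c : R}
    (hc : 16 * c ^ 2 + 12 * c + 1 = 0) : 64 * c ^ 2 * (3 * c + 2) = 1 := by
  linear_combination (12 * c - 1) * hc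

theorem pullback_diagonal (a b : ℂ) (A B : P2) :
    pullback (C a * X 0) (C b * X 1) A B =
      (C a * aeval ![C a * X 0, C b * X 1] A, C b * aeval ![C a * X 0, C b * X 1] B) := by
  simp [pullback, mul_comm]

theorem pullback_diagonal_quartic (a b p q r s : ℂ) :
    pullback (C a * X 0) (C b * X 1)
        (X 1 ^ 3 * (C p * X 0 + C q * X 1)) (X 0 ^ 3 * (C r * X 0 + C s * X 1)) =
      (X 1 ^ 3 * (C (a ^ 2 * b ^ 3 * p) * X 0 + C (a * b ^ 4 * q) * X 1),
       X 0 ^ 3 * (C (a ^ 4 * b * r) * X 0 + C (a ^ 3 * b ^ 2 * s) * X 1)) := by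
  rw [pullback_diagonal]
  ext1 <;>
  · simp only [map_mul, map_add, map_pow, aeval_X, aeval_C, algebraMap_eq, Matrix.cons_val_zero,
      Matrix.cons_val_one]
    ring

theorem pullback_omega_eq {c : ℂ} (hc : 16 * c ^ 2 + 12 * c + 1 = 0) :
    pullback (2 * X 0) (8 * C c * X 1)
        (X 1 ^ 3 * (2 * X 1 + 3 * C c * X 1 - 4 * C c * X 0 - 3 * X 0))
        (X 0 ^ 3 * (X 1 + C c * X 0)) =
      (C (128 * c ^ 2) * (X 1 ^ 3 * (4 * X 0 + X 1)),
       C (128 * c ^ 2) * (X 0 ^ 3 * (X 0 + 4 * X 1))) := by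
  have hφ₁ : (2 * X 0 : P2) = C 2 * X 0 := by rw [map_ofNat]
  have hφ₂ : (8 * C c * X 1 : P2) = C (8 * c) * X 1 := by rw [map_mul, map_ofNat]
  have hA : (2 * X 1 + 3 * C c * X 1 - 4 * C c * X 0 - 3 * X 0 : P2) =
      C (-(4 * c + 3)) * X 0 + C (3 * c + 2) * X 1 := by
    simp only [map_neg, map_add, map_mul, map_ofNat]
    ring
  have hB : (X 1 + C c * X 0 : P2) = C c * X 0 + C 1 * X 1 := by
    rw [map_one, one_mul, add_comm]
  have dx_x : 2 ^ 2 * (8 * c) ^ 3 * -(4 * c + 3) = 128 * c ^ 2 * 4 := by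
    linear_combination -512 * c ^ 2 * hc
  have dx_y : 2 * (8 * c) ^ 4 * (3 * c + 2) = 128 * c ^ 2 := by
    linear_combination 128 * c ^ 2 * sixtyfour_mul_sq_mul_eq_one hc
  have dy_x : 2 ^ 4 * (8 * c) * c = 128 * c ^ 2 := by ring
  have dy_y : 2 ^ 3 * (8 * c) ^ 2 * 1 = 128 * c ^ 2 * 4 := by ring
  rw [hφ₁, hφ₂, hA, hB, pullback_diagonal_quartic, dx_x, dx_y, dy_x, dy_y,
    C_mul (a := 128 * c ^ 2) (a' := 4), map_ofNat C 4]
  ext1 <;> ring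

/-- For `16c² + 12c + 1 = 0` and `φ(x,y) = (2x, 8cy)`, one has
`ω₄ = ((3c+2)/2)·φ*ω` where `ω = y³(2y+3cy−4cx−3x)dx + x³(y+cx)dy`. -/
theorem omega4_pullback (c : ℂ) (hc : 16 * c ^ 2 + 12 * c + 1 = 0) :
    (X 1 ^ 3 * (4 * X 0 + X 1), X 0 ^ 3 * (X 0 + 4 * X 1)) =
      (C ((3 * c + 2) / 2) *
        (pullback (2 * X 0) (8 * C c * X 1)
          (X 1 ^ 3 * (2 * X 1 + 3 * C c * X 1 - 4 * C c * X 0 - 3 * X 0))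
          (X 0 ^ 3 * (X 1 + C c * X 0))).1,
       C ((3 * c + 2) / 2) *
        (pullback (2 * X 0) (8 * C c * X 1)
          (X 1 ^ 3 * (2 * X 1 + 3 * C c * X 1 - 4 * C c * X 0 - 3 * X 0))
          (X 0 ^ 3 * (X 1 + C c * X 0))).2) := by
  have hinv : (3 * c + 2) / 2 * (128 * c ^ 2) = 1 := by
    linear_combination sixtyfour_mul_sq_mul_eq_one hc
  rw [pullback_omega_eq hc]
  simp only [← mul_assoc (C _) (C _), ← C_mul, hinv, C_1, one_mul]
end
end

section
/- Let α ∈ ℂ satisfy α² − α + 1 = 0. Set ω = y²(6αx² − 4(α+1)xy + 3y²)dx − (2α−1)x⁴dy and let φ be the linear map φ(x,y) = ((α−2)x, y). Then ω₅ := y²(6x²+4xy+y²)dx + 3x⁴dy satisfies ω₅ = ((1−α)/(α−2)³)·φ*ω. -/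
open MvPolynomial

noncomputable section

/-- The 1-form `y²(a·x² + b·xy + c·y²)dx + d·x⁴dy`, as the pair of its `dx`- and
`dy`-coefficients. Both `ω` and `ω₅` have this shape, and scaling `x` preserves it: every monomial
form is an eigenvector, so comparing `ω₅` with the pullback of `ω` reduces to four identities
between numbers. -/
def quarticForm (a b c d : ℂ) : P2 × P2 :=
  (X 1 ^ 2 * (C a * X 0 ^ 2 + C b * X 0 * X 1 + C c * X 1 ^ 2), C d * X 0 ^ 4)

lemma smul_quarticForm (k a b c d : ℂ) :
    k • quarticForm a b c d = quarticForm (k * a) (k * b) (k * c) (k * d) := by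
  simp only [quarticForm, Prod.smul_mk, smul_eq_C_mul, C_mul]
  ext1 <;> ring

lemma pullback_C_mul_X_zero (s : ℂ) (A B : P2) :
    pullback (C s * X 0) (X 1) A B =
      (C s * aeval ![C s * X 0, X 1] A, aeval ![C s * X 0, X 1] B) := by
  have pderiv_zero_X_one : pderiv (0 : Fin 2) (X 1 : P2) = 0 := pderiv_X_of_ne (by decide)
  have pderiv_one_X_zero : pderiv (1 : Fin 2) (X 0 : P2) = 0 := pderiv_X_of_ne (by decide)
  simp [pullback, pderiv_zero_X_one, pderiv_one_X_zero, mul_comm]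

lemma pullback_C_mul_X_zero_quarticForm (s a b c d : ℂ) :
    pullback (C s * X 0) (X 1) (quarticForm a b c d).1 (quarticForm a b c d).2 =
      quarticForm (s ^ 3 * a) (s ^ 2 * b) (s * c) (s ^ 4 * d) := by
  simp only [pullback_C_mul_X_zero, quarticForm, map_mul, map_add, map_pow, aeval_X, aeval_C,
    algebraMap_eq, Matrix.cons_val_zero, Matrix.cons_val_one]
  ext1 <;> ring

section CommRing

variable {R : Type*} [CommRing R] {α : R}

lemma sub_two_mul_add_one_of_sq_sub_self_add_one (hα : α ^ 2 - α + 1 = 0) :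
    (α - 2) * (α + 1) = -3 := by
  linear_combination hα

lemma sub_two_ne_zero_of_sq_sub_self_add_one (h3 : (3 : R) ≠ 0) (hα : α ^ 2 - α + 1 = 0) :
    α - 2 ≠ 0 := by
  refine left_ne_zero_of_mul (b := α + 1) ?_
  rwa [sub_two_mul_add_one_of_sq_sub_self_add_one hα, neg_ne_zero]

lemma self_mul_one_sub_of_sq_sub_self_add_one (hα : α ^ 2 - α + 1 = 0) :
    α * (1 - α) = 1 := by
  linear_combination -hα

lemma one_sub_mul_add_one_of_sq_sub_self_add_one (hα : α ^ 2 - α + 1 = 0) :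
    (1 - α) * (α + 1) = -(α - 2) := by
  linear_combination -hα

lemma one_sub_mul_three_of_sq_sub_self_add_one (hα : α ^ 2 - α + 1 = 0) :
    (1 - α) * 3 = (α - 2) ^ 2 := by
  linear_combination -hα

lemma one_sub_mul_two_mul_sub_one_of_sq_sub_self_add_one (hα : α ^ 2 - α + 1 = 0) :
    (1 - α) * (2 * α - 1) = α + 1 := by
  linear_combination -2 * hα

end CommRing

lemma smul_pullback_quarticForm_of_sq_sub_self_add_one {α : ℂ} (hα : α ^ 2 - α + 1 = 0) :
    ((1 - α) / (α - 2) ^ 3) •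
        pullback (C (α - 2) * X 0) (X 1)
          (quarticForm (6 * α) (-(4 * (α + 1))) 3 (-(2 * α - 1))).1
          (quarticForm (6 * α) (-(4 * (α + 1))) 3 (-(2 * α - 1))).2 =
      quarticForm 6 4 1 3 := by
  have hs : α - 2 ≠ 0 := sub_two_ne_zero_of_sq_sub_self_add_one three_ne_zero hα
  rw [pullback_C_mul_X_zero_quarticForm, smul_quarticForm]
  congr 1
  · field_simp
    exact self_mul_one_sub_of_sq_sub_self_add_one hα
  · field_simp
    linear_combination -one_sub_mul_add_one_of_sq_sub_self_add_one hα
  · field_simp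
    exact one_sub_mul_three_of_sq_sub_self_add_one hα
  · field_simp
    linear_combination
      -(α - 2) * one_sub_mul_two_mul_sub_one_of_sq_sub_self_add_one hα -
        sub_two_mul_add_one_of_sq_sub_self_add_one hα

/-- For `α² − α + 1 = 0` and `φ(x,y) = ((α−2)x, y)`, one has
`ω₅ = ((1−α)/(α−2)³)·φ*ω` where `ω = y²(6αx² − 4(α+1)xy + 3y²)dx − (2α−1)x⁴dy`. -/
theorem omega5_pullback (α : ℂ) (hα : α ^ 2 - α + 1 = 0) :
    (X 1 ^ 2 * (6 * X 0 ^ 2 + 4 * X 0 * X 1 + X 1 ^ 2), 3 * X 0 ^ 4) =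
      (C ((1 - α) / (α - 2) ^ 3) *
        (pullback (C (α - 2) * X 0) (X 1)
          (X 1 ^ 2 * (6 * C α * X 0 ^ 2 - 4 * (C α + 1) * X 0 * X 1 + 3 * X 1 ^ 2))
          (-((2 * C α - 1) * X 0 ^ 4))).1,
       C ((1 - α) / (α - 2) ^ 3) *
        (pullback (C (α - 2) * X 0) (X 1)
          (X 1 ^ 2 * (6 * C α * X 0 ^ 2 - 4 * (C α + 1) * X 0 * X 1 + 3 * X 1 ^ 2))
          (-((2 * C α - 1) * X 0 ^ 4))).2) := by
  have hω : quarticForm (6 * α) (-(4 * (α + 1))) 3 (-(2 * α - 1)) =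
      (X 1 ^ 2 * (6 * C α * X 0 ^ 2 - 4 * (C α + 1) * X 0 * X 1 + 3 * X 1 ^ 2),
        -((2 * C α - 1) * X 0 ^ 4)) := by
    simp only [quarticForm, map_mul, map_add, map_sub, map_neg, map_one, map_ofNat]
    ext1 <;> ring
  have hω₅ : quarticForm 6 4 1 3 =
      (X 1 ^ 2 * (6 * X 0 ^ 2 + 4 * X 0 * X 1 + X 1 ^ 2), 3 * X 0 ^ 4) := by
    simp only [quarticForm, map_ofNat, map_one, one_mul]
  have hpullback := smul_pullback_quarticForm_of_sq_sub_self_add_one hα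
  rw [hω, hω₅] at hpullback
  rw [← hpullback]
  exact Prod.ext (smul_eq_C_mul _ _) (smul_eq_C_mul _ _)
end
end

section
/- Let F be a reduced convex foliation of degree d ≥ 1 on ℙ²(ℂ) defined by ω = a dx + b dy + c dz (so F admits 3d pairwise non-proportional invariant lines), and suppose a(0,0,1) = b(0,0,1) = 0, so s = [0:0:1] is a singular point of F. Then the number of the 3d invariant lines of F passing through s (i.e. whose defining linear forms vanish at (0,0,1)) equals the order of vanishing at (0,0) of the two-variable polynomial c(x,y,1); this order equals τ(F,s) + 1, where τ(F,s) is the tangency order of F with a generic line through s. -/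
open MvPolynomial

noncomputable section

/-- Polynomials in three variables `x = X 0`, `y = X 1`, `z = X 2` over `ℂ`. -/
abbrev P3 : Type := MvPolynomial (Fin 3) ℂ

/-- The linear form `αx + βy + γz` with coefficient vector `l = (α, β, γ)`. -/
def lin (l : Fin 3 → ℂ) : P3 := C (l 0) * X 0 + C (l 1) * X 1 + C (l 2) * X 2

/-- The line `{αx + βy + γz = 0}` is invariant by the foliation defined by
`ω = a dx + b dy + c dz`: the linear form divides the coefficients of `ω ∧ dℓ`. -/
def InvLine (a b c : P3) (l : Fin 3 → ℂ) : Prop :=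
  l ≠ 0 ∧
  lin l ∣ (C (l 1) * a - C (l 0) * b) ∧
  lin l ∣ (C (l 2) * a - C (l 0) * c) ∧
  lin l ∣ (C (l 2) * b - C (l 1) * c)

/-- `(a, b, c)` defines a foliation of degree `d` on `ℙ²(ℂ)`: homogeneous of degree
`d+1`, without common factor, satisfying the Euler condition. -/
def IsFoliation (d : ℕ) (a b c : P3) : Prop :=
  a.IsHomogeneous (d + 1) ∧ b.IsHomogeneous (d + 1) ∧ c.IsHomogeneous (d + 1) ∧
  (∀ p : P3, p ∣ a → p ∣ b → p ∣ c → IsUnit p) ∧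
  X 0 * a + X 1 * b + X 2 * c = 0

/-- Restriction to the affine chart `z = 1`: `p(x, y, 1)`. -/
def chartZ (p : P3) : P2 := aeval ![(X 0 : P2), X 1, 1] p

/-- The order of vanishing of `p` at the origin `(0,0)` is `n`: all homogeneous
components of degree `< n` vanish and the component of degree `n` does not. -/
def OrdIs (p : P2) (n : ℕ) : Prop :=
  (∀ k, k < n → homogeneousComponent k p = 0) ∧ homogeneousComponent n p ≠ 0

/-!
Let `ℓ` be the equation of an invariant line. The quotients of the coefficients of `ω ∧ dℓ` by `ℓ`
are the components of a homogeneous vector field `D` of degree `d` on `ℂ³` such that `Dℓ = 0` and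
`ω` is the contraction of the volume form with `D` and the radial field. The equation `m` of any
invariant line divides `Dm`, hence all `Dⁱm`, hence the Wronskian `W = det (v, Dv, D²v)` of
`v = (x, y, z)`, which is homogeneous of degree `3d`. Provided `W ≠ 0`, it is up to a constant the
product of the `3d` linear forms, and its order at `s` is the number `r` of lines through `s`.

To see that `W ≠ 0`, write `Dx_i` in terms of `A = Dx` and `B = Dy`, which are coprime. If `W = 0`,
then `A DB = B DA`, and coprimality forces the derivatives of `A` and `B` along `ℓ = 0` to be those
of a homothety; Euler's identity then gives `ℓ ∣ c`, so `ℓ` is a common factor of `a`, `b`, `c`.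

A linear form vanishing at `s` whose line is invariant divides `c`, so `r ≤ ord_s c`. Conversely
`x W = b Dc - c Db`. On the chart `z = 1` the field `D` acts as `b ∂/∂x - a ∂/∂y` plus a
multiplication operator, and `a`, `b` vanish at `s`, so `D` does not lower orders at `s`. Hence
`1 + ord_s W ≥ 1 + ord_s c`, that is, `ord_s c ≤ r`.
-/

section Wronskian

variable {R A : Type*} [CommRing A] {n : ℕ}

/-- The generalized Wronskian of `v` with respect to a derivation `D`: the determinant whose
`i`-th row is `Dⁱ v`. For `v = (x, y, z)` it is the extactic polynomial of the vector field `D`,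
whose zeros are the inflection points of the orbits. -/
def wronskian [CommSemiring R] [Algebra R A] (D : Derivation R A A) (v : Fin n → A) : A :=
  (Matrix.of fun i j : Fin n => ((D : A →ₗ[R] A) ^ (i : ℕ)) (v j)).det

theorem dvd_pow_apply_of_dvd_apply [CommSemiring R] [Algebra R A] {D : Derivation R A A} {q : A}
    (hq : q ∣ D q) (k : ℕ) : q ∣ ((D : A →ₗ[R] A) ^ k) q := by
  induction k with
  | zero => simp
  | succ k ih =>
    obtain ⟨u, hu⟩ := ih
    rw [pow_succ', Module.End.mul_apply, hu, Derivation.coeFn_coe, D.leibniz]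
    exact dvd_add (dvd_mul_right _ _) (hq.mul_left _)

theorem sum_smul_dvd_wronskian [Field R] [Algebra R A] {D : Derivation R A A} {v : Fin n → A}
    {m : Fin n → R} (hm : m ≠ 0) (hdvd : ∑ k, m k • v k ∣ D (∑ k, m k • v k)) :
    ∑ k, m k • v k ∣ wronskian D v := by
  obtain ⟨j, hj⟩ := Function.ne_iff.mp hm
  set q := ∑ k, m k • v k with hq
  choose u hu using fun i : Fin n => dvd_pow_apply_of_dvd_apply hdvd i
  set M : Matrix (Fin n) (Fin n) A := Matrix.of fun i j => ((D : A →ₗ[R] A) ^ (i : ℕ)) (v j) with hM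
  have hcol : (fun i => ∑ k, algebraMap R A (m k) • M i k) = q • u := by
    funext i
    rw [Pi.smul_apply, smul_eq_mul, ← hu i, hq, map_sum]
    exact Finset.sum_congr rfl fun k _ => by rw [algebraMap_smul, map_smul, hM, Matrix.of_apply]
  have hdet : algebraMap R A (m j) * wronskian D v = q * (M.updateCol j u).det := by
    rw [wronskian, ← hM, ← Matrix.det_updateCol_smul, ← hcol, Matrix.det_updateCol_sum,
      smul_eq_mul]
  rw [← ((isUnit_iff_ne_zero.mpr hj).map (algebraMap R A)).dvd_mul_left, hdet]
  exact dvd_mul_right _ _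

end Wronskian

section Derivation

theorem derivation_apply_mem_pow {R A : Type*} [CommSemiring R] [CommSemiring A] [Algebra R A]
    {D : Derivation R A A} {I : Ideal A} (hD : ∀ p ∈ I, D p ∈ I) (n : ℕ) {p : A} (hp : p ∈ I ^ n) :
    D p ∈ I ^ n := by
  induction n generalizing p with
  | zero => simp
  | succ n ih =>
    rw [pow_succ] at hp ⊢
    refine Submodule.mul_induction_on hp (fun r hr s hs => ?_) fun r s hr hs => ?_
    · rw [D.leibniz, smul_eq_mul, smul_eq_mul, mul_comm s]
      exact add_mem (Ideal.mul_mem_mul hr (hD s hs)) (Ideal.mul_mem_mul (ih hr) hs)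
    · rw [map_add]
      exact add_mem hr hs

theorem derivation_apply_mem_span {R A : Type*} [CommSemiring R] [CommSemiring A] [Algebra R A]
    {D : Derivation R A A} {s : Set A} (hD : ∀ x ∈ s, D x ∈ Ideal.span s) {p : A}
    (hp : p ∈ Ideal.span s) : D p ∈ Ideal.span s := by
  induction hp using Submodule.span_induction with
  | mem x hx => exact hD x hx
  | zero => simp
  | add x y _ _ hx hy => rw [map_add]; exact add_mem hx hy
  | smul r x hx h =>
    rw [smul_eq_mul, D.leibniz]
    exact add_mem (Ideal.mul_mem_left _ _ h) (Ideal.mul_mem_right _ _ hx)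

variable {σ R : Type*} [CommSemiring R]

theorem derivation_apply_eq_sum_pderiv [Fintype σ]
    (D : Derivation R (MvPolynomial σ R) (MvPolynomial σ R)) (p : MvPolynomial σ R) :
    D p = ∑ i, pderiv i p * D (X i) := by
  classical
  have hsum (q : MvPolynomial σ R) :
      (∑ i, D (X i) • pderiv i : Derivation R _ (MvPolynomial σ R)) q =
        ∑ i, pderiv i q * D (X i) := by
    rw [← Derivation.coeFnAddMonoidHom_apply, map_sum, Finset.sum_apply]
    exact Finset.sum_congr rfl fun i _ => mul_comm _ _
  have hD : D = ∑ i, D (X i) • pderiv i :=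
    derivation_ext fun j => by simp [hsum, pderiv_X, Pi.single_apply]
  rw [← hsum, ← hD]

theorem isHomogeneous_derivation_apply [Finite σ]
    {D : Derivation R (MvPolynomial σ R) (MvPolynomial σ R)} {d e : ℕ}
    (hD : ∀ i, (D (X i)).IsHomogeneous d) {p : MvPolynomial σ R} (hp : p.IsHomogeneous e) :
    (D p).IsHomogeneous (e - 1 + d) := by
  have := Fintype.ofFinite σ
  rw [derivation_apply_eq_sum_pderiv]
  exact IsHomogeneous.sum _ _ _ fun i _ => hp.pderiv.mul (hD i)

end Derivation

section Homogeneous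

variable {σ R : Type*} [CommRing R] [IsDomain R] {p q : MvPolynomial σ R} {d e : ℕ}

theorem isHomogeneous_of_mul_left (hp : p.IsHomogeneous d) (hp0 : p ≠ 0)
    (hpq : (p * q).IsHomogeneous (d + e)) : q.IsHomogeneous e := by
  let := MvPolynomial.gradedAlgebra (σ := σ) (R := R)
  have hcomp : homogeneousComponent (d + e) (p * q) = p * homogeneousComponent e q := by
    rw [← decomposition.decompose'_apply, ← decomposition.decompose'_apply]
    exact DirectSum.coe_decompose_mul_add_of_left_mem (homogeneousSubmodule σ R) hp
  rw [homogeneousComponent_eq_self hpq] at hcomp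
  rw [mul_left_cancel₀ hp0 hcomp]
  exact homogeneousComponent_isHomogeneous e q

theorem eq_zero_of_dvd_of_lt (hp : p.IsHomogeneous d) (hq : q.IsHomogeneous e) (hed : e < d)
    (h : p ∣ q) : q = 0 := by
  by_contra hq0
  have hdeg := totalDegree_le_of_dvd_of_isDomain h hq0
  rw [hp.totalDegree (ne_zero_of_dvd_ne_zero hq0 h), hq.totalDegree hq0] at hdeg
  omega

theorem not_isUnit_of_isHomogeneous (hp : p.IsHomogeneous d) (hd : d ≠ 0) : ¬ IsUnit p := fun h =>
  hd (hp.totalDegree h.ne_zero ▸ (isUnit_iff_totalDegree_of_isReduced.mp h).2)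

theorem isUnit_C_of_ne_zero {σ K : Type*} [Field K] {t : K} (ht : t ≠ 0) :
    IsUnit (C t : MvPolynomial σ K) :=
  (isUnit_iff_ne_zero.mpr ht).map C

theorem dvd_of_dvd_of_isHomogeneous {K : Type*} [Field K] {p q : MvPolynomial σ K}
    (hp : p.IsHomogeneous d) (hq : q.IsHomogeneous d) (hq0 : q ≠ 0) (h : p ∣ q) : q ∣ p := by
  obtain ⟨u, rfl⟩ := h
  obtain ⟨hp0, hu0⟩ := mul_ne_zero_iff.mp hq0
  have hdeg := hq.totalDegree hq0
  rw [totalDegree_mul_of_isDomain hp0 hu0, hp.totalDegree hp0, Nat.add_eq_left,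
    totalDegree_eq_zero_iff_eq_C] at hdeg
  have hu : IsUnit u := by
    rw [hdeg] at hu0 ⊢
    exact isUnit_C_of_ne_zero fun h0 => hu0 (by rw [h0, map_zero])
  exact hu.mul_right_dvd.mpr dvd_rfl

-- The hypothesis `h` says that `(A, B)` is an eigenvector of the matrix `!![p, q; r, s]`.
theorem eq_scalar_of_isRelPrime_eigenvector {σ K : Type*} [Field K] {A B p q r s : MvPolynomial σ K}
    (hA : A.IsHomogeneous d) (hB : B.IsHomogeneous d) (hAB : IsRelPrime A B)
    (hq : q.IsHomogeneous e) (hr : r.IsHomogeneous e) (hed : e < d)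
    (h : A * (A * r + B * s) = B * (A * p + B * q)) : q = 0 ∧ r = 0 ∧ p = s := by
  have hA0 : A ≠ 0 := by
    rintro rfl
    exact not_isUnit_of_isHomogeneous hB (by omega) (hAB (dvd_zero _) dvd_rfl)
  have hB0 : B ≠ 0 := by
    rintro rfl
    exact not_isUnit_of_isHomogeneous hA (by omega) (hAB dvd_rfl (dvd_zero _))
  have hq0 : q = 0 := by
    have hdvd : A ∣ B * (B * q) := ⟨A * r + B * s - B * p, by linear_combination -h⟩
    exact eq_zero_of_dvd_of_lt hA hq hed
      (hAB.dvd_of_dvd_mul_left (hAB.dvd_of_dvd_mul_left hdvd))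
  have hr0 : r = 0 := by
    have hdvd : B ∣ A * (A * r) := ⟨A * p + B * q - A * s, by linear_combination h⟩
    exact eq_zero_of_dvd_of_lt hB hr hed
      (hAB.symm.dvd_of_dvd_mul_left (hAB.symm.dvd_of_dvd_mul_left hdvd))
  subst hq0 hr0
  exact ⟨rfl, rfl, mul_left_cancel₀ (mul_ne_zero hA0 hB0) (by linear_combination -h)⟩

end Homogeneous

section LinearForm

variable {l m : Fin 3 → ℂ}

theorem lin_eq_sum_smul (l : Fin 3 → ℂ) : lin l = ∑ i, l i • X i := by
  simp only [lin, Fin.sum_univ_three, smul_eq_C_mul]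

theorem derivation_lin (D : Derivation ℂ P3 P3) (l : Fin 3 → ℂ) :
    D (lin l) = C (l 0) * D (X 0) + C (l 1) * D (X 1) + C (l 2) * D (X 2) := by
  rw [lin_eq_sum_smul, map_sum, Fin.sum_univ_three, D.map_smul, D.map_smul, D.map_smul]
  simp only [smul_eq_C_mul]

theorem lin_injective : Function.Injective lin := fun l m h => by
  have heval (v : Fin 3 → ℂ) := congrArg (eval v) h
  simp only [lin, map_add, map_mul, eval_C, eval_X] at heval
  funext i
  fin_cases i
  · simpa using heval ![1, 0, 0]
  · simpa using heval ![0, 1, 0]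
  · simpa using heval ![0, 0, 1]

theorem lin_ne_zero (hl : l ≠ 0) : lin l ≠ 0 := fun h =>
  hl (lin_injective (h.trans (by simp [lin])))

theorem lin_isHomogeneous (l : Fin 3 → ℂ) : (lin l).IsHomogeneous 1 :=
  ((isHomogeneous_C_mul_X _ _).add (isHomogeneous_C_mul_X _ _)).add (isHomogeneous_C_mul_X _ _)

theorem lin_prime (hl : l ≠ 0) : Prime (lin l) := by
  rw [← irreducible_iff_prime]
  refine irreducible_of_totalDegree_eq_one ((lin_isHomogeneous l).totalDegree (lin_ne_zero hl))
    fun t ht => isUnit_iff_ne_zero.mpr ?_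
  rintro rfl
  exact lin_ne_zero hl (ext _ _ fun i => by simpa using ht i)

theorem exists_eq_smul_of_lin_dvd_lin (hl : l ≠ 0) (h : lin m ∣ lin l) :
    ∃ t : ℂ, l = t • m := by
  obtain ⟨k, hk⟩ := h
  have hm0 : lin m ≠ 0 := left_ne_zero_of_mul (hk ▸ lin_ne_zero hl)
  have hk_hom : k.IsHomogeneous 0 :=
    isHomogeneous_of_mul_left (lin_isHomogeneous m) hm0 (hk ▸ lin_isHomogeneous l)
  rw [← totalDegree_zero_iff_isHomogeneous, totalDegree_eq_zero_iff_eq_C] at hk_hom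
  refine ⟨coeff 0 k, lin_injective ?_⟩
  rw [hk, hk_hom, coeff_C, if_pos rfl, lin_eq_sum_smul, lin_eq_sum_smul, mul_comm, Finset.mul_sum]
  exact Finset.sum_congr rfl fun i _ => by
    rw [← smul_eq_C_mul, smul_smul, Pi.smul_apply, smul_eq_mul]

theorem isRelPrime_lin (hl : l ≠ 0) (hm : m ≠ 0) (h : ∀ t : ℂ, l ≠ t • m) :
    IsRelPrime (lin l) (lin m) :=
  IsRelPrime.symm <| (lin_prime hm).irreducible.isRelPrime_iff_not_dvd.mpr fun hdvd =>
    (exists_eq_smul_of_lin_dvd_lin hl hdvd).elim h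

theorem prod_lin_dvd {ι : Type*} {L : ι → Fin 3 → ℂ} (hL : ∀ i, L i ≠ 0)
    (hnp : ∀ i j, i ≠ j → ∀ t : ℂ, L i ≠ t • L j) {s : Finset ι} {p : P3}
    (h : ∀ i ∈ s, lin (L i) ∣ p) : ∏ i ∈ s, lin (L i) ∣ p :=
  Finset.prod_dvd_of_isRelPrime
    (fun i _ j _ hij => isRelPrime_lin (hL i) (hL j) (hnp i j hij)) h

theorem prod_lin_isHomogeneous {ι : Type*} (L : ι → Fin 3 → ℂ) (s : Finset ι) :
    (∏ i ∈ s, lin (L i)).IsHomogeneous s.card := by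
  simpa using IsHomogeneous.prod s _ _ fun i _ => lin_isHomogeneous (L i)

end LinearForm

section Order

theorem natCast_le_order_iff {σ R : Type*} [CommSemiring R] {p : MvPolynomial σ R} {n : ℕ} :
    (n : ℕ∞) ≤ (p : MvPowerSeries σ R).order ↔ p ∈ idealOfVars σ R ^ n := by
  rw [mem_pow_idealOfVars_iff']
  refine ⟨fun h x hx => ?_, fun h => MvPowerSeries.nat_le_order fun x hx => ?_⟩
  · rw [← coeff_coe]
    exact MvPowerSeries.coeff_of_lt_order ((Nat.cast_lt.mpr hx).trans_le h)
  · rw [coeff_coe]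
    exact h x hx

theorem ordIs_iff_order_eq {p : P2} {n : ℕ} :
    OrdIs p n ↔ (p : MvPowerSeries (Fin 2) ℂ).order = n := by
  rw [OrdIs, MvPowerSeries.order_eq_nat, and_comm]
  refine and_congr ?_ ?_
  · simp [ne_zero_iff, coeff_homogeneousComponent, and_comm]
  · simp only [MvPolynomial.ext_iff, coeff_homogeneousComponent, coeff_coe, coeff_zero,
      ite_eq_right_iff]
    exact ⟨fun h x hx => h _ hx x rfl, fun h k hk x hx => h x (hx ▸ hk)⟩

end Order

section ChartOrder

theorem constantCoeff_chartZ (p : P3) : constantCoeff (chartZ p) = eval ![0, 0, 1] p := by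
  have h : (constantCoeff (R := ℂ)).comp
      (aeval ![(X 0 : P2), X 1, 1] : P3 →ₐ[ℂ] P2).toRingHom = eval ![0, 0, 1] := by
    refine ringHom_ext (fun r => by simp) fun i => ?_
    fin_cases i <;> simp
  exact RingHom.congr_fun h p

theorem pderiv_chartZ (j : Fin 2) (p : P3) :
    pderiv j (chartZ p) = chartZ (pderiv j.castSucc p) := by
  unfold chartZ
  induction p using MvPolynomial.induction_on with
  | C r => simp
  | add p q hp hq => simp only [map_add, hp, hq]
  | mul_X p i hp =>
    simp only [map_mul, Derivation.leibniz, hp, aeval_X, smul_eq_mul, map_add, pderiv_X]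
    fin_cases j <;> fin_cases i <;> simp [pderiv_X]

/-- The vanishing order of a polynomial at the origin of the affine chart `z = 1`, with value `⊤`
if it vanishes identically on the chart. -/
def chartOrder (p : P3) : ℕ∞ := (chartZ p : MvPowerSeries (Fin 2) ℂ).order

variable {p q : P3} {n : ℕ}

theorem natCast_le_chartOrder_iff :
    (n : ℕ∞) ≤ chartOrder p ↔ chartZ p ∈ idealOfVars (Fin 2) ℂ ^ n :=
  natCast_le_order_iff

theorem chartOrder_mul (p q : P3) : chartOrder (p * q) = chartOrder p + chartOrder q := by
  rw [chartOrder, chartZ, map_mul, coe_mul, MvPowerSeries.order_mul]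
  rfl

theorem chartOrder_prod {ι : Type*} (f : ι → P3) (s : Finset ι) :
    chartOrder (∏ i ∈ s, f i) = ∑ i ∈ s, chartOrder (f i) := by
  rw [chartOrder, chartZ, map_prod, ← coeToMvPowerSeries.ringHom_apply, map_prod,
    MvPowerSeries.order_prod]
  rfl

theorem chartOrder_le_of_dvd (h : p ∣ q) : chartOrder p ≤ chartOrder q := by
  obtain ⟨r, rfl⟩ := h
  rw [chartOrder_mul]
  exact le_self_add

theorem le_chartOrder_sub {n : ℕ∞} (hp : n ≤ chartOrder p) (hq : n ≤ chartOrder q) :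
    n ≤ chartOrder (p - q) := by
  refine ENat.forall_natCast_le_iff_le.mp fun k hk => ?_
  have hp' := natCast_le_chartOrder_iff.mp (hk.trans hp)
  have hq' := natCast_le_chartOrder_iff.mp (hk.trans hq)
  rw [natCast_le_chartOrder_iff, chartZ, map_sub]
  exact sub_mem hp' hq'

theorem one_le_chartOrder_iff : 1 ≤ chartOrder p ↔ eval ![0, 0, 1] p = 0 := by
  rw [chartOrder, MvPowerSeries.one_le_order_iff_constCoeff_eq_zero, ← constantCoeff_chartZ,
    ← MvPowerSeries.coeff_zero_eq_constantCoeff_apply, coeff_coe, constantCoeff_eq]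

theorem chartOrder_lin {l : Fin 3 → ℂ} (hl : l ≠ 0) :
    chartOrder (lin l) = if l 2 = 0 then 1 else 0 := by
  have heval : eval ![0, 0, 1] (lin l) = l 2 := by simp [lin]
  split_ifs with h2
  · obtain ⟨j, hj⟩ : ∃ j : Fin 2, l j.castSucc ≠ 0 := by
      by_contra! h
      exact hl (funext fun i => Fin.lastCases h2 h i)
    refine le_antisymm ?_ (one_le_chartOrder_iff.mpr (heval.trans h2))
    have hcoeff : coeff (Finsupp.single j 1) (chartZ (lin l)) = l j.castSucc := by
      simp only [lin, chartZ, map_add, map_mul, aeval_C, aeval_X, algebraMap_eq, coeff_add,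
        coeff_C_mul]
      fin_cases j <;> simp [coeff_X, coeff_one, h2, Finsupp.single_eq_single_iff]
    rw [← hcoeff, ← coeff_coe] at hj
    exact (MvPowerSeries.order_le hj).trans_eq (by simp)
  · rw [← heval, ← one_le_chartOrder_iff, not_le] at h2
    exact Order.lt_one_iff.mp h2

theorem chartOrder_prod_lin {ι : Type*} {L : ι → Fin 3 → ℂ} (hL : ∀ i, L i ≠ 0) (s : Finset ι) :
    chartOrder (∏ i ∈ s, lin (L i)) = {i ∈ s | L i 2 = 0}.card := by
  simp only [chartOrder_prod, chartOrder_lin (hL _), Finset.sum_boole]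

end ChartOrder

section TangentField

/-- `D` is a homogeneous vector field of degree `d` on `ℂ³` whose contraction, together with the
radial vector field, with the volume form `dx ∧ dy ∧ dz` is the form `a dx + b dy + c dz`. -/
structure IsTangentField (d : ℕ) (a b c : P3) (D : Derivation ℂ P3 P3) : Prop where
  isHomogeneous : ∀ i, (D (X i)).IsHomogeneous d
  eq_a : a = X 1 * D (X 2) - X 2 * D (X 1)
  eq_b : b = X 2 * D (X 0) - X 0 * D (X 2)
  eq_c : c = X 0 * D (X 1) - X 1 * D (X 0)

variable {d e : ℕ} {a b c p : P3} {D : Derivation ℂ P3 P3} {l : Fin 3 → ℂ}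

theorem exists_isTangentField (hfol : IsFoliation d a b c) (hl : InvLine a b c l) :
    ∃ D, IsTangentField d a b c D ∧ D (lin l) = 0 := by
  obtain ⟨ha, hb, hc, -, heuler⟩ := hfol
  obtain ⟨hl0, ⟨w, hw⟩, ⟨v, hv⟩, ⟨u, hu⟩⟩ := hl
  have hlin := lin_ne_zero hl0
  have hquot {t s : ℂ} {p q r : P3} (hp : p.IsHomogeneous (d + 1)) (hq : q.IsHomogeneous (d + 1))
      (h : C t * p - C s * q = lin l * r) : r.IsHomogeneous d := by
    refine isHomogeneous_of_mul_left (lin_isHomogeneous l) hlin ?_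
    rw [← h, add_comm]
    exact (hp.C_mul t).sub (hq.C_mul s)
  refine ⟨mkDerivation ℂ ![u, -v, w], ⟨fun i => ?_, ?_, ?_, ?_⟩, ?_⟩
  · fin_cases i <;> simp only [mkDerivation_X]
    exacts [hquot hb hc hu, (hquot ha hc hv).neg, hquot ha hb hw]
  all_goals
    apply mul_left_cancel₀ hlin
    simp only [derivation_lin, mkDerivation_X, Matrix.cons_val]
    simp only [lin] at hu hv hw ⊢
  · linear_combination X 1 * hw + X 2 * hv + C (l 0) * heuler
  · linear_combination X 2 * hu - X 0 * hw + C (l 1) * heuler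
  · linear_combination -X 0 * hv - X 1 * hu + C (l 2) * heuler
  · linear_combination -C (l 0) * hu + C (l 1) * hv - C (l 2) * hw

/-- The vector field `b ∂/∂x - a ∂/∂y` on the chart `z = 1`. -/
def affineField (a b : P3) : Derivation ℂ P2 P2 := mkDerivation ℂ ![chartZ b, -chartZ a]

theorem affineField_apply_mem_pow {n : ℕ} {p : P2} (ha : eval ![0, 0, 1] a = 0)
    (hb : eval ![0, 0, 1] b = 0) (hp : p ∈ idealOfVars (Fin 2) ℂ ^ n) :
    affineField a b p ∈ idealOfVars (Fin 2) ℂ ^ n := by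
  have hmem {q : P3} (hq : eval ![0, 0, 1] q = 0) : chartZ q ∈ idealOfVars (Fin 2) ℂ := by
    rw [← pow_one (idealOfVars _ _), ← natCast_le_chartOrder_iff, Nat.cast_one]
    exact one_le_chartOrder_iff.mpr hq
  refine derivation_apply_mem_pow (fun q hq => derivation_apply_mem_span ?_ hq) n hp
  rintro _ ⟨i, rfl⟩
  fin_cases i
  · simpa [affineField] using hmem hb
  · simpa [affineField] using hmem ha

namespace IsTangentField

variable (h : IsTangentField d a b c D)
include h

theorem lin_dvd_apply_lin (hl : InvLine a b c l) : lin l ∣ D (lin l) := by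
  obtain ⟨hl0, -, ha, hb⟩ := hl
  have hprime := lin_prime hl0
  have hx : lin l ∣ X 0 * D (lin l) := by
    have hid : X 0 * D (lin l) = D (X 0) * lin l - (C (l 2) * b - C (l 1) * c) := by
      rw [derivation_lin, h.eq_b, h.eq_c, lin]; ring
    exact hid ▸ dvd_sub (dvd_mul_left _ _) hb
  have hy : lin l ∣ X 1 * D (lin l) := by
    have hid : X 1 * D (lin l) = D (X 1) * lin l + (C (l 2) * a - C (l 0) * c) := by
      rw [derivation_lin, h.eq_a, h.eq_c, lin]; ring
    exact hid ▸ dvd_add (dvd_mul_left _ _) ha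
  by_contra hnot
  have hlx := (hprime.dvd_or_dvd hx).resolve_right hnot
  have hly := (hprime.dvd_or_dvd hy).resolve_right hnot
  have hassoc := hprime.irreducible.associated_of_dvd X_prime.irreducible hlx
  exact absurd (X_dvd_X.mp (hassoc.dvd'.trans hly)) (by decide)

theorem lin_dvd_wronskian (hl : InvLine a b c l) : lin l ∣ wronskian D (X : Fin 3 → P3) := by
  have hdvd := h.lin_dvd_apply_lin hl
  rw [lin_eq_sum_smul] at hdvd ⊢
  exact sum_smul_dvd_wronskian hl.1 hdvd

theorem wronskian_eq :
    wronskian D (X : Fin 3 → P3) = a * D (D (X 0)) + b * D (D (X 1)) + c * D (D (X 2)) := by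
  rw [wronskian, Matrix.det_fin_three, h.eq_a, h.eq_b, h.eq_c]
  simp only [Matrix.of_apply, Fin.coe_ofNat_eq_mod, Nat.zero_mod, Nat.one_mod, Nat.reduceMod,
    pow_zero, pow_one, pow_two, Module.End.mul_apply, Module.End.one_apply, Derivation.coeFn_coe]
  ring

theorem wronskian_isHomogeneous (hd : 1 ≤ d) :
    (wronskian D (X : Fin 3 → P3)).IsHomogeneous (3 * d) := by
  have hX (i : Fin 3) : ((X i : P3)).IsHomogeneous 1 := isHomogeneous_X ℂ i
  have hD := h.isHomogeneous
  have hDD (i : Fin 3) := isHomogeneous_derivation_apply hD (hD i)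
  have hminor (i j : Fin 3) := (hX i).mul (hD j)
  have hdeg : 3 * d = 1 + d + (d - 1 + d) := by omega
  rw [h.wronskian_eq, h.eq_a, h.eq_b, h.eq_c, hdeg]
  exact (((hminor 1 2).sub (hminor 2 1)).mul (hDD 0)).add
    (((hminor 2 0).sub (hminor 0 2)).mul (hDD 1)) |>.add
    (((hminor 0 1).sub (hminor 1 0)).mul (hDD 2))

theorem X_zero_mul_wronskian : X 0 * wronskian D (X : Fin 3 → P3) = b * D c - c * D b := by
  rw [h.wronskian_eq, h.eq_a, h.eq_b, h.eq_c]
  simp only [map_sub, Derivation.leibniz, smul_eq_mul]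
  ring

theorem chartZ_apply (hp : p.IsHomogeneous e) :
    chartZ (D p) = affineField a b (chartZ p) + e * chartZ (D (X 2)) * chartZ p := by
  have heuler := congrArg chartZ hp.sum_X_mul_pderiv
  have hX : chartZ (X 0) = X 0 ∧ chartZ (X 1) = X 1 ∧ chartZ (X 2) = 1 := by simp [chartZ]
  rw [derivation_apply_eq_sum_pderiv D, derivation_apply_eq_sum_pderiv (affineField a b)]
  simp only [affineField, mkDerivation_X, pderiv_chartZ, h.eq_a, h.eq_b, Fin.sum_univ_three,
    Fin.sum_univ_two, Fin.castSucc_zero, Fin.castSucc_one, Matrix.cons_val]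
  simp only [chartZ, Fin.sum_univ_three, map_add, map_mul, map_sub, nsmul_eq_mul,
    map_natCast] at heuler hX ⊢
  simp only [hX] at heuler ⊢
  linear_combination aeval ![(X 0 : P2), X 1, 1] (D (X 2)) * heuler

theorem chartOrder_le_chartOrder_apply (ha : eval ![0, 0, 1] a = 0) (hb : eval ![0, 0, 1] b = 0)
    (hp : p.IsHomogeneous e) : chartOrder p ≤ chartOrder (D p) := by
  refine ENat.forall_natCast_le_iff_le.mp fun n hn => ?_
  rw [natCast_le_chartOrder_iff] at hn ⊢
  rw [h.chartZ_apply hp]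
  exact add_mem (affineField_apply_mem_pow ha hb hn) (Ideal.mul_mem_left _ _ hn)

theorem chartOrder_c_le_chartOrder_wronskian (ha : eval ![0, 0, 1] a = 0)
    (hb : eval ![0, 0, 1] b = 0) (hb_hom : b.IsHomogeneous (d + 1))
    (hc_hom : c.IsHomogeneous (d + 1)) :
    chartOrder c ≤ chartOrder (wronskian D (X : Fin 3 → P3)) := by
  have hb1 := one_le_chartOrder_iff.mpr hb
  have hDc := h.chartOrder_le_chartOrder_apply ha hb hc_hom
  have hDb := hb1.trans (h.chartOrder_le_chartOrder_apply ha hb hb_hom)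
  have hX : chartOrder (X 0) = 1 := by
    simp [chartOrder, chartZ, MvPowerSeries.X, MvPowerSeries.order_monomial_of_ne_zero]
  suffices 1 + chartOrder c ≤ 1 + chartOrder (wronskian D (X : Fin 3 → P3)) from
    (ENat.add_le_add_iff_left ENat.one_ne_top).mp this
  rw [← hX, ← chartOrder_mul _ (wronskian _ _), h.X_zero_mul_wronskian]
  refine le_chartOrder_sub ?_ ?_
  · rw [chartOrder_mul, hX]
    exact add_le_add hb1 hDc
  · rw [chartOrder_mul, hX, add_comm]
    exact add_le_add le_rfl hDb

end IsTangentField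

end TangentField

section Nonvanishing

/-- The derivation `l₂ ∂ᵢ - lᵢ ∂_z`, a constant vector field tangent to the line of equation
`lin l`. -/
def tangentPartial (l : Fin 3 → ℂ) (i : Fin 3) : Derivation ℂ P3 P3 :=
  l 2 • pderiv i - l i • pderiv 2

variable {d : ℕ} {a b c p : P3} {D : Derivation ℂ P3 P3} {l : Fin 3 → ℂ}

theorem tangentPartial_apply (l : Fin 3 → ℂ) (i : Fin 3) (p : P3) :
    tangentPartial l i p = C (l 2) * pderiv i p - C (l i) * pderiv 2 p := by
  simp [tangentPartial, smul_eq_C_mul]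

theorem tangentPartial_isHomogeneous (i : Fin 3) (hp : p.IsHomogeneous d) :
    (tangentPartial l i p).IsHomogeneous (d - 1) := by
  rw [tangentPartial_apply]
  exact (hp.pderiv.C_mul _).sub (hp.pderiv.C_mul _)

theorem C_mul_derivation_apply_of_lin_eq_zero (hD : D (lin l) = 0) (p : P3) :
    C (l 2) * D p =
      D (X 0) * tangentPartial l 0 p + D (X 1) * tangentPartial l 1 p := by
  rw [derivation_lin] at hD
  rw [derivation_apply_eq_sum_pderiv, Fin.sum_univ_three, tangentPartial_apply,
    tangentPartial_apply]
  linear_combination pderiv 2 p * hD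

theorem C_mul_nsmul_eq_tangentPartial (hp : p.IsHomogeneous d) :
    C (l 2) * (d • p) =
      X 0 * tangentPartial l 0 p + X 1 * tangentPartial l 1 p + lin l * pderiv 2 p := by
  rw [← hp.sum_X_mul_pderiv, Fin.sum_univ_three, tangentPartial_apply, tangentPartial_apply, lin]
  ring

namespace IsTangentField

variable (h : IsTangentField d a b c D)
include h

theorem isRelPrime_apply (hfol : IsFoliation d a b c) (hD : D (lin l) = 0) (hl2 : l 2 ≠ 0) :
    IsRelPrime (D (X 0)) (D (X 1)) := by
  intro p h0 h1
  have h2 : p ∣ D (X 2) := by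
    rw [derivation_lin] at hD
    rw [← (isUnit_C_of_ne_zero hl2).dvd_mul_left, eq_neg_of_add_eq_zero_right hD, dvd_neg]
    exact dvd_add (h0.mul_left _) (h1.mul_left _)
  obtain ⟨-, -, -, hcoprime, -⟩ := hfol
  refine hcoprime p ?_ ?_ ?_
  · exact h.eq_a ▸ dvd_sub (h2.mul_left _) (h1.mul_left _)
  · exact h.eq_b ▸ dvd_sub (h0.mul_left _) (h2.mul_left _)
  · exact h.eq_c ▸ dvd_sub (h1.mul_left _) (h0.mul_left _)

theorem C_mul_wronskian (hD : D (lin l) = 0) :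
    C (l 2) * wronskian D (X : Fin 3 → P3) =
      lin l * (D (X 0) * D (D (X 1)) - D (X 1) * D (D (X 0))) := by
  rw [derivation_lin] at hD
  have hDD := congrArg D hD
  simp only [map_add, map_zero, D.leibniz, derivation_C, smul_eq_mul, mul_zero, add_zero] at hDD
  rw [h.wronskian_eq, h.eq_a, h.eq_b, h.eq_c, lin]
  linear_combination (X 0 * D (X 1) - X 1 * D (X 0)) * hDD +
    (X 1 * D (D (X 0)) - X 0 * D (D (X 1))) * hD

theorem lin_dvd_c_of_wronskian_eq_zero (hd : 1 ≤ d) (hfol : IsFoliation d a b c)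
    (hD : D (lin l) = 0) (hl2 : l 2 ≠ 0) (hW : wronskian D (X : Fin 3 → P3) = 0) :
    lin l ∣ c := by
  have hA := h.isHomogeneous 0
  have hB := h.isHomogeneous 1
  have hWr : D (X 0) * D (D (X 1)) - D (X 1) * D (D (X 0)) = 0 :=
    (mul_eq_zero.mp ((h.C_mul_wronskian hD).symm.trans (by rw [hW, mul_zero]))).resolve_left
      (lin_ne_zero fun hl => hl2 (congrFun hl 2))
  obtain ⟨h1A, h0B, hAB⟩ := eq_scalar_of_isRelPrime_eigenvector hA hB
    (h.isRelPrime_apply hfol hD hl2) (tangentPartial_isHomogeneous 1 hA)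
    (tangentPartial_isHomogeneous 0 hB) (by omega) (by
      rw [← C_mul_derivation_apply_of_lin_eq_zero hD, ← C_mul_derivation_apply_of_lin_eq_zero hD]
      linear_combination C (l 2) * hWr)
  have hunit : IsUnit (C (l 2) * (d : P3)) := by
    rw [← map_natCast C, ← map_mul]
    exact isUnit_C_of_ne_zero (mul_ne_zero hl2 (by exact_mod_cast (by omega : d ≠ 0)))
  have hdA := C_mul_nsmul_eq_tangentPartial (l := l) hA
  have hdB := C_mul_nsmul_eq_tangentPartial (l := l) hB
  rw [← hunit.dvd_mul_left]
  refine ⟨X 0 * pderiv 2 (D (X 1)) - X 1 * pderiv 2 (D (X 0)), ?_⟩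
  rw [h1A, nsmul_eq_mul] at hdA
  rw [h0B, nsmul_eq_mul] at hdB
  rw [h.eq_c]
  linear_combination X 0 * hdB - X 1 * hdA - X 0 * X 1 * hAB

theorem wronskian_ne_zero (hd : 1 ≤ d) (hfol : IsFoliation d a b c) (hl : InvLine a b c l)
    (hD : D (lin l) = 0) (hl2 : l 2 ≠ 0) : wronskian D (X : Fin 3 → P3) ≠ 0 := fun hW => by
  obtain ⟨hl0, -, ha, hb⟩ := hl
  have hc := h.lin_dvd_c_of_wronskian_eq_zero hd hfol hD hl2 hW
  obtain ⟨-, -, -, hcoprime, -⟩ := hfol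
  refine (lin_prime hl0).not_isUnit (hcoprime _ ?_ ?_ hc)
  · rwa [dvd_sub_left (hc.mul_left _), (isUnit_C_of_ne_zero hl2).dvd_mul_left] at ha
  · rwa [dvd_sub_left (hc.mul_left _), (isUnit_C_of_ne_zero hl2).dvd_mul_left] at hb

end IsTangentField

end Nonvanishing

section LinesThroughSingularity

variable {d : ℕ} {a b c : P3}

theorem IsFoliation.c_ne_zero (hfol : IsFoliation d a b c) (hd : 1 ≤ d) : c ≠ 0 := by
  obtain ⟨ha, -, -, hcoprime, heuler⟩ := hfol
  rintro rfl
  have hya : X 1 ∣ a := by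
    have hdvd : X 1 ∣ X 0 * a := ⟨-b, by linear_combination heuler⟩
    exact (X_prime.dvd_or_dvd hdvd).resolve_left fun h => absurd (X_dvd_X.mp h) (by decide)
  obtain ⟨g, rfl⟩ := hya
  have hb : b = X 0 * -g := by
    apply mul_left_cancel₀ (X_ne_zero (R := ℂ) (1 : Fin 3))
    linear_combination heuler
  have hg : IsUnit g :=
    hcoprime g (dvd_mul_left _ _) (hb ▸ (dvd_neg.mpr dvd_rfl).mul_left _) (dvd_zero _)
  exact X_ne_zero 1 (eq_zero_of_dvd_of_lt ha (isHomogeneous_X ℂ 1) (by omega)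
    (hg.mul_right_dvd.mpr dvd_rfl))

theorem InvLine.lin_dvd_c {l : Fin 3 → ℂ} (hl : InvLine a b c l) (hl2 : l 2 = 0) : lin l ∣ c := by
  obtain ⟨hl0, -, ha, hb⟩ := hl
  obtain ⟨i, hi⟩ := Function.ne_iff.mp hl0
  rw [hl2, map_zero, zero_mul, zero_sub, dvd_neg] at ha hb
  fin_cases i
  · exact (isUnit_C_of_ne_zero hi).dvd_mul_left.mp ha
  · exact (isUnit_C_of_ne_zero hi).dvd_mul_left.mp hb
  · exact absurd hl2 hi

theorem IsFoliation.chartZ_c (hfol : IsFoliation d a b c) :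
    X 0 * chartZ a + X 1 * chartZ b = -chartZ c := by
  obtain ⟨-, -, -, -, heuler⟩ := hfol
  have h := congrArg chartZ heuler
  simp only [chartZ, map_add, map_mul, map_zero, aeval_X, Matrix.cons_val, one_mul] at h
  exact eq_neg_of_add_eq_zero_left h

variable {ι : Type*} [Fintype ι] {L : ι → Fin 3 → ℂ}

theorem exists_invLine_not_through_origin (hd : 1 ≤ d) (hfol : IsFoliation d a b c)
    (hcard : Fintype.card ι = 3 * d) (hinv : ∀ i, InvLine a b c (L i))
    (hnp : ∀ i j, i ≠ j → ∀ t : ℂ, L i ≠ t • L j) : ∃ i, L i 2 ≠ 0 := by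
  by_contra! h
  have hdvd : ∏ i, lin (L i) ∣ c :=
    prod_lin_dvd (fun i => (hinv i).1) hnp fun i _ => (hinv i).lin_dvd_c (h i)
  refine hfol.c_ne_zero hd (eq_zero_of_dvd_of_lt (prod_lin_isHomogeneous L _) hfol.2.2.1 ?_ hdvd)
  rw [Finset.card_univ, hcard]
  omega

theorem IsTangentField.wronskian_dvd_prod_lin {D : Derivation ℂ P3 P3}
    (h : IsTangentField d a b c D) (hW : wronskian D (X : Fin 3 → P3) ≠ 0) (hd : 1 ≤ d)
    (hcard : Fintype.card ι = 3 * d) (hinv : ∀ i, InvLine a b c (L i))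
    (hnp : ∀ i j, i ≠ j → ∀ t : ℂ, L i ≠ t • L j) :
    wronskian D (X : Fin 3 → P3) ∣ ∏ i, lin (L i) := by
  have hdvd := prod_lin_dvd (s := Finset.univ) (fun i => (hinv i).1) hnp
    fun i _ => h.lin_dvd_wronskian (hinv i)
  refine dvd_of_dvd_of_isHomogeneous ?_ (h.wronskian_isHomogeneous hd) hW hdvd
  rw [← hcard]
  exact prod_lin_isHomogeneous L Finset.univ

theorem card_lines_through_origin_le_chartOrder (hinv : ∀ i, InvLine a b c (L i))
    (hnp : ∀ i j, i ≠ j → ∀ t : ℂ, L i ≠ t • L j) :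
    (({i | L i 2 = 0} : Finset ι).card : ℕ∞) ≤ chartOrder c := by
  have hL (i) : L i ≠ 0 := (hinv i).1
  calc
    (({i | L i 2 = 0} : Finset ι).card : ℕ∞)
    _ = chartOrder (∏ i with L i 2 = 0, lin (L i)) := by
      rw [chartOrder_prod_lin hL, Finset.filter_filter]
      simp only [and_self]
    _ ≤ chartOrder c := chartOrder_le_of_dvd <| prod_lin_dvd hL hnp fun i hi =>
      (hinv i).lin_dvd_c (Finset.mem_filter.mp hi).2

end LinesThroughSingularity

/-- For a reduced convex foliation `F` of degree `d ≥ 1` with singular point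
`s = [0:0:1]`, the number of the `3d` invariant lines of `F` through `s` equals the
vanishing order of `c(x,y,1)` at `(0,0)`, and this order equals `τ(F,s) + 1`, encoded by
`ord_{(0,0)}(x·a(x,y,1) + y·b(x,y,1))`. -/
theorem reduced_convex_lines_through_singularity
    (d : ℕ) (hd : 1 ≤ d) (a b c : P3) (hfol : IsFoliation d a b c)
    (L : Fin (3 * d) → (Fin 3 → ℂ))
    (hinv : ∀ i, InvLine a b c (L i))
    (hnp : ∀ i j, i ≠ j → ∀ t : ℂ, L i ≠ t • L j)
    (ha : eval ![0, 0, 1] a = 0) (hb : eval ![0, 0, 1] b = 0) :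
    ∃ n : ℕ,
      {i : Fin (3 * d) | L i 2 = 0}.ncard = n ∧
      OrdIs (chartZ c) n ∧
      OrdIs (X 0 * chartZ a + X 1 * chartZ b) n := by
  obtain ⟨i₀, hi₀⟩ := exists_invLine_not_through_origin hd hfol (Fintype.card_fin _) hinv hnp
  obtain ⟨D, hD, hDi₀⟩ := exists_isTangentField hfol (hinv i₀)
  have hW_ne_zero := hD.wronskian_ne_zero hd hfol (hinv i₀) hDi₀ hi₀
  set S : Finset (Fin (3 * d)) := {i | L i 2 = 0} with hS
  have hc_le : chartOrder c ≤ S.card := calc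
    chartOrder c
    _ ≤ chartOrder (wronskian D X) :=
      hD.chartOrder_c_le_chartOrder_wronskian ha hb hfol.2.1 hfol.2.2.1
    _ ≤ chartOrder (∏ i, lin (L i)) := chartOrder_le_of_dvd <|
      hD.wronskian_dvd_prod_lin hW_ne_zero hd (Fintype.card_fin _) hinv hnp
    _ = S.card := chartOrder_prod_lin (fun i => (hinv i).1) _
  have hc : OrdIs (chartZ c) S.card :=
    ordIs_iff_order_eq.mpr (hc_le.antisymm (card_lines_through_origin_le_chartOrder hinv hnp))
  refine ⟨S.card, by simp [Set.ncard_eq_toFinset_card', hS], hc, ?_⟩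
  rw [hfol.chartZ_c]
  simpa [OrdIs] using hc
end
end

section
/- Every foliation of degree d ≥ 1 on ℙ²(ℂ) possesses at least one non-radial singularity. Precisely: let ω = a dx + b dy + c dz define a foliation of degree d ≥ 1 on ℙ²(ℂ). Then there exists M ∈ GL₃(ℂ) such that the pullback M*ω = a′dx + b′dy + c′dz satisfies a′(0,0,1) = b′(0,0,1) = 0 (so [0:0:1] is a singular point), and it is NOT the case that ∂a′/∂x(0,0,1) = 0, ∂b′/∂y(0,0,1) = 0 and ∂a′/∂y(0,0,1) = −∂b′/∂x(0,0,1) ≠ 0. -/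
open MvPolynomial

noncomputable section

/-- Composition of a polynomial with the linear map of `ℂ³` given by the matrix `M`. -/
def compM (M : Matrix (Fin 3) (Fin 3) ℂ) (p : P3) : P3 :=
  aeval (fun i => ∑ j, C (M i j) * X j) p

/-- The coefficients of the pullback `M*ω`, i.e. `Mᵀ·(a∘M, b∘M, c∘M)`. -/
def pullbackM (M : Matrix (Fin 3) (Fin 3) ℂ) (a b c : P3) : Fin 3 → P3 :=
  fun i => C (M 0 i) * compM M a + C (M 1 i) * compM M b + C (M 2 i) * compM M c

/-!
Let `w = (a, b, c)` and suppose that every singular point `p` is radial. In homogeneous coordinates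
radiality says that the Jacobian matrix of `w` at `p` is a nonzero multiple of the matrix of
`v ↦ p × v`. This has two consequences. The matrix is skew, so every `gᵢⱼ = ∂ⱼwᵢ + ∂ᵢwⱼ` vanishes
on the singular locus. It has rank two, so near `p` the ideal `I = (a, b, c)` is the full ideal of
the line through `p`, and hence `gᵢⱼ` lies in `I` locally away from the origin. As the entries of
`w` have no common factor and `X · w = 0`, the ideal `I` is saturated with respect to `(x, y, z)`,
so `gᵢⱼ ∈ I`. But `I` is generated in degree `d + 1` while `gᵢⱼ` has degree `d`, which forces
`gᵢⱼ = 0`. Finally `∑ⱼ Xⱼ gᵢⱼ = (d + 1) wᵢ - wᵢ = d wᵢ` by Euler's identity, so `w = 0`, a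
contradiction.
-/

section PrimitiveVector

variable {R : Type*} [CommRing R] {ι : Type*}

/-- A vector over `R` whose entries have no common factor besides units. This is the condition on
the coefficients of a projective 1-form that makes its singular locus finite. -/
def IsPrimitiveVector (w : ι → R) : Prop :=
  ∀ p : R, (∀ i, p ∣ w i) → IsUnit p

namespace IsPrimitiveVector

variable {w : ι → R}

lemma of_ne_zero {K : Type*} [Field K] {w : ι → K} (hw : w ≠ 0) : IsPrimitiveVector w := by
  obtain ⟨i, hi⟩ := Function.ne_iff.1 hw
  exact fun p hp ↦ (ne_zero_of_dvd_ne_zero hi (hp i)).isUnit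

lemma ne_zero [Nontrivial R] (hw : IsPrimitiveVector w) : w ≠ 0 := by
  rintro rfl
  exact not_isUnit_zero (hw 0 fun _ ↦ dvd_rfl)

variable [UniqueFactorizationMonoid R] [Finite ι]

lemma dvd_of_forall_dvd_mul (hw : IsPrimitiveVector w) {f v : R} (h : ∀ i, f ∣ v * w i) :
    f ∣ v := by
  let _ : Fintype ι := Fintype.ofFinite ι
  let _ : GCDMonoid R := UniqueFactorizationMonoid.toGCDMonoid R
  let _ : NormalizedGCDMonoid R := Classical.arbitrary _
  have hunit : IsUnit (Finset.univ.gcd w) := hw _ fun i ↦ Finset.gcd_dvd (Finset.mem_univ i)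
  rw [← hunit.dvd_mul_right, ← (Finset.univ.gcd_mul_left' w v).dvd_iff_dvd_right]
  exact Finset.dvd_gcd fun i _ ↦ h i

lemma exists_eq_smul_of_mul_eq_mul [IsDomain R] (hw : IsPrimitiveVector w) {v : ι → R}
    (h : ∀ i j, v i * w j = v j * w i) : ∃ r : R, v = r • w := by
  obtain ⟨j, hj⟩ := Function.ne_iff.1 hw.ne_zero
  obtain ⟨r, hr⟩ : w j ∣ v j := hw.dvd_of_forall_dvd_mul fun i ↦ ⟨v i, by rw [← h i j, mul_comm]⟩
  refine ⟨r, funext fun i ↦ mul_right_cancel₀ hj ?_⟩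
  rw [h i j, hr, Pi.smul_apply, smul_eq_mul]
  ring

end IsPrimitiveVector

end PrimitiveVector

section CrossProduct

open Matrix

variable {R : Type*} [CommRing R]

lemma IsPrimitiveVector.exists_eq_smul_of_cross_eq_zero [IsDomain R] [UniqueFactorizationMonoid R]
    {w v : Fin 3 → R} (hw : IsPrimitiveVector w) (h : v ⨯₃ w = 0) : ∃ r : R, v = r • w := by
  refine hw.exists_eq_smul_of_mul_eq_mul fun i j ↦ ?_
  rw [cross_apply] at h
  have h0 := congrFun h 0
  have h1 := congrFun h 1
  have h2 := congrFun h 2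
  simp only [cons_val, Pi.zero_apply] at h0 h1 h2
  fin_cases i <;> fin_cases j <;> grind

lemma IsPrimitiveVector.exists_cross_eq_smul [IsDomain R] [UniqueFactorizationMonoid R]
    {w u x : Fin 3 → R} (hw : IsPrimitiveVector w) (hu : u ⬝ᵥ w = 0) (hx : x ⬝ᵥ w = 0) :
    ∃ r : R, u ⨯₃ x = r • w :=
  hw.exists_eq_smul_of_cross_eq_zero <| by simp [cross_cross_eq_smul_sub_smul, hu, hx]

end CrossProduct

section Koszul

open Matrix

variable {R : Type*} [CommRing R]

lemma mem_span_X_image_of_X_mul_mem {σ : Type*} {s : Set σ} {j : σ} (hj : j ∉ s)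
    {f : MvPolynomial σ R} (h : X j * f ∈ Ideal.span (X '' s : Set (MvPolynomial σ R))) :
    f ∈ Ideal.span (X '' s : Set (MvPolynomial σ R)) := by
  rw [mem_ideal_span_X_image] at h ⊢
  intro m hm
  obtain ⟨i, hi, hne⟩ := h (Finsupp.single j 1 + m) (by simpa using hm)
  have hji : j ≠ i := fun e ↦ hj (e ▸ hi)
  exact ⟨i, hi, by simpa [hji] using hne⟩

lemma exists_eq_cross_X_of_X_dotProduct_eq_zero {v : Fin 3 → MvPolynomial (Fin 3) R}
    (h : X ⬝ᵥ v = 0) : ∃ m, v = m ⨯₃ X := by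
  simp only [vec3_dotProduct] at h
  obtain ⟨s, t, hst⟩ : ∃ s t, s * X 0 + t * X 1 = v 2 := by
    rw [← Ideal.mem_span_pair, ← Set.image_pair]
    refine mem_span_X_image_of_X_mul_mem (j := 2) (by simp) ?_
    rw [Set.image_pair, Ideal.mem_span_pair]
    exact ⟨-v 0, -v 1, by linear_combination -h⟩
  obtain ⟨r, hr⟩ : ∃ r, r * X 0 = v 1 + X 2 * t := by
    rw [← Ideal.mem_span_singleton', ← Set.image_singleton]
    refine mem_span_X_image_of_X_mul_mem (j := 1) (by simp) ?_
    rw [Set.image_singleton, Ideal.mem_span_singleton']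
    exact ⟨-(v 0 + X 2 * s), by linear_combination -h - X 2 * hst⟩
  refine ⟨![t, -s, r], funext fun i ↦ ?_⟩
  rw [cross_apply]
  fin_cases i
  · change v 0 = -s * X 2 - r * X 1
    refine X_mul_cancel_left_iff (i := 0).1 ?_
    linear_combination h + X 1 * hr + X 2 * hst
  · change v 1 = r * X 0 - t * X 2
    linear_combination -hr
  · change v 2 = t * X 1 - -s * X 0
    linear_combination -hst

lemma isPrimitiveVector_X {σ : Type*} [Nontrivial σ] [IsDomain R] :
    IsPrimitiveVector (X : σ → MvPolynomial σ R) := by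
  intro p hp
  obtain ⟨i, j, hij⟩ := exists_pair_ne σ
  refine (X_prime.irreducible.dvd_iff.1 (hp i)).resolve_right fun hassoc ↦ ?_
  simpa [hij] using hassoc.dvd.trans (hp j)

-- The fractions `β i j / (X i * X j)` form a Čech 1-cocycle of the structure sheaf of
-- `𝔸³ ∖ {0}`, and `τ i / X i` is a cochain bounding it.
lemma exists_eq_X_mul_sub_X_mul {β : Fin 3 → Fin 3 → MvPolynomial (Fin 3) R}
    (hdiag : ∀ i, β i i = 0) (hcocycle : ∀ i j k, X i * β j k + X j * β k i + X k * β i j = 0) :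
    ∃ τ : Fin 3 → MvPolynomial (Fin 3) R, ∀ i j, β i j = X i * τ j - X j * τ i := by
  have hanti (i j) : β j i = -β i j := by
    refine X_mul_cancel_left_iff (i := i).1 ?_
    linear_combination hcocycle i i j - X j * hdiag i
  obtain ⟨m, hm⟩ := exists_eq_cross_X_of_X_dotProduct_eq_zero
    (v := ![β 1 2, β 2 0, β 0 1]) (by rw [vec3_dotProduct]; exact hcocycle 0 1 2)
  rw [cross_apply] at hm
  have h12 : β 1 2 = m 1 * X 2 - m 2 * X 1 := congrFun hm 0
  have h20 : β 2 0 = m 2 * X 0 - m 0 * X 2 := congrFun hm 1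
  have h01 : β 0 1 = m 0 * X 1 - m 1 * X 0 := congrFun hm 2
  refine ⟨-m, fun i j ↦ ?_⟩
  fin_cases i <;> fin_cases j <;> simp [hdiag, hanti 0 1, hanti 1 2, hanti 2 0, h01, h12, h20] <;>
    ring

end Koszul

section Saturation

open Matrix

lemma mem_span_range_iff_exists_dotProduct {R ι : Type*} [CommSemiring R] [Fintype ι]
    {w : ι → R} {g : R} : g ∈ Ideal.span (Set.range w) ↔ ∃ u : ι → R, u ⬝ᵥ w = g :=
  Ideal.mem_span_range_iff_exists_fun

variable {K : Type*} [Field K] {w : Fin 3 → MvPolynomial (Fin 3) K}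

-- Where `X i ≠ 0`, the vector `u i / X i` expresses `g` in terms of `w`. Two such expressions
-- differ by a syzygy of `w`, and the cross product of a syzygy with `X` is a multiple of `w`.
lemma exists_cross_X_eq (hw : IsPrimitiveVector w) (hX : X ⬝ᵥ w = 0)
    {u : Fin 3 → Fin 3 → MvPolynomial (Fin 3) K} {g : MvPolynomial (Fin 3) K}
    (hu : ∀ i, u i ⬝ᵥ w = X i * g) :
    ∃ τ : Fin 3 → MvPolynomial (Fin 3) K, ∀ i j,
      ((X i : MvPolynomial (Fin 3) K) • u j - (X j : MvPolynomial (Fin 3) K) • u i) ⨯₃ X =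
        (X i * τ j - X j * τ i) • w := by
  have hsyz (i j) :
      ((X i : MvPolynomial (Fin 3) K) • u j - (X j : MvPolynomial (Fin 3) K) • u i) ⬝ᵥ w = 0 := by
    simp only [sub_dotProduct, smul_dotProduct, hu, smul_eq_mul]
    ring
  choose β hβ using fun i j ↦ hw.exists_cross_eq_smul (hsyz i j) hX
  have hcancel {r : MvPolynomial (Fin 3) K} (h : r • w = 0) : r = 0 :=
    (smul_eq_zero.1 h).resolve_right hw.ne_zero
  obtain ⟨τ, hτ⟩ : ∃ τ : Fin 3 → MvPolynomial (Fin 3) K, ∀ i j,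
      β i j = X i * τ j - X j * τ i := by
    refine exists_eq_X_mul_sub_X_mul (fun i ↦ hcancel ?_) fun i j k ↦ hcancel ?_
    · simp [← hβ]
    · simp only [add_smul, mul_smul, ← hβ, ← LinearMap.map_smul₂, ← LinearMap.map_add₂]
      convert LinearMap.map_zero₂ _ _
      module
  exact ⟨τ, fun i j ↦ by rw [hβ, hτ]⟩

lemma mem_span_range_of_forall_X_mul_mem (hw : IsPrimitiveVector w) (hX : X ⬝ᵥ w = 0)
    {g : MvPolynomial (Fin 3) K} (hg : ∀ i, X i * g ∈ Ideal.span (Set.range w)) :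
    g ∈ Ideal.span (Set.range w) := by
  simp only [mem_span_range_iff_exists_dotProduct] at hg ⊢
  choose u hu using hg
  obtain ⟨τ, hτ⟩ := exists_cross_X_eq hw hX hu
  have hprop (i j) : (X i : MvPolynomial (Fin 3) K) • (u j ⨯₃ X - τ j • w) =
      (X j : MvPolynomial (Fin 3) K) • (u i ⨯₃ X - τ i • w) := by
    have h := hτ i j
    simp only [LinearMap.map_sub₂, LinearMap.map_smul₂, sub_smul, mul_smul] at h
    rwa [smul_sub, smul_sub, sub_eq_sub_iff_sub_eq_sub]
  obtain ⟨k, hk⟩ : ∃ k : Fin 3 → MvPolynomial (Fin 3) K, ∀ j,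
      u j ⨯₃ X - τ j • w = (X j : MvPolynomial (Fin 3) K) • k := by
    choose k hk using fun l ↦ isPrimitiveVector_X.exists_eq_smul_of_mul_eq_mul
      (v := fun j ↦ (u j ⨯₃ X - τ j • w) l) fun i j ↦ by
        simpa [mul_comm] using congrFun (hprop j i) l
    exact ⟨k, fun j ↦ funext fun l ↦ by simpa [mul_comm] using congrFun (hk l) j⟩
  obtain ⟨m, rfl⟩ : ∃ m, k = m ⨯₃ X := by
    refine exists_eq_cross_X_of_X_dotProduct_eq_zero (X_mul_cancel_left_iff (i := 0).1 ?_)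
    rw [← smul_eq_mul, ← dotProduct_smul, ← hk 0, dotProduct_sub, dot_cross_self, dotProduct_smul,
      hX, smul_zero, sub_zero, mul_zero]
  have hpar : (u 0 - (X 0 : MvPolynomial (Fin 3) K) • m) ⨯₃ X = τ 0 • w := by
    rw [LinearMap.map_sub₂, LinearMap.map_smul₂, ← hk 0, sub_sub_cancel]
  have horth : (u 0 - (X 0 : MvPolynomial (Fin 3) K) • m) ⬝ᵥ w = 0 := by
    have h := cross_cross_eq_smul_sub_smul (u 0 - (X 0 : MvPolynomial (Fin 3) K) • m) X w
    rw [hpar, hX, LinearMap.map_smul₂, cross_self, zero_smul, sub_zero, smul_zero] at h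
    exact (smul_eq_zero.1 h.symm).resolve_right isPrimitiveVector_X.ne_zero
  rw [sub_dotProduct, smul_dotProduct, hu, smul_eq_mul, sub_eq_zero] at horth
  exact ⟨m, (X_mul_cancel_left_iff.1 horth).symm⟩

lemma mem_span_range_of_forall_mem_pow (hw : IsPrimitiveVector w) (hX : X ⬝ᵥ w = 0)
    {g : MvPolynomial (Fin 3) K} (n : ℕ)
    (hg : ∀ f ∈ idealOfVars (Fin 3) K ^ n, f * g ∈ Ideal.span (Set.range w)) :
    g ∈ Ideal.span (Set.range w) := by
  induction n with
  | zero => simpa using hg 1 (by simp)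
  | succ n ih =>
    refine ih fun f hf ↦ mem_span_range_of_forall_X_mul_mem hw hX fun i ↦ ?_
    rw [← mul_assoc]
    refine hg _ ?_
    rw [pow_succ']
    exact Ideal.mul_mem_mul (Ideal.subset_span ⟨i, rfl⟩) hf

lemma idealOfVars_le_radical {σ K : Type*} [Finite σ] [Field K] [IsAlgClosed K]
    {I : Ideal (MvPolynomial σ K)} (h : ∀ p : σ → K, p ≠ 0 → ∃ f ∈ I, eval p f ≠ 0) :
    idealOfVars σ K ≤ I.radical := by
  rw [Ideal.span_le]
  rintro _ ⟨i, rfl⟩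
  rw [SetLike.mem_coe, ← vanishingIdeal_zeroLocus_eq_radical (K := K), mem_vanishingIdeal_iff]
  intro p hp
  by_cases hp0 : p = 0
  · simp [hp0]
  · obtain ⟨f, hf, hpf⟩ := h p hp0
    exact absurd (hp f hf) hpf

lemma mem_span_range_of_locally_mem [IsAlgClosed K] (hw : IsPrimitiveVector w) (hX : X ⬝ᵥ w = 0)
    {g : MvPolynomial (Fin 3) K}
    (hg : ∀ p : Fin 3 → K, p ≠ 0 →
      ∃ f, f * g ∈ Ideal.span (Set.range w) ∧ eval p f ≠ 0) :
    g ∈ Ideal.span (Set.range w) := by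
  obtain ⟨n, hn⟩ := Ideal.exists_pow_le_of_le_radical_of_fg
    (idealOfVars_le_radical (I := (Ideal.span (Set.range w)).colon {g}) (by
      simpa only [Submodule.mem_colon_singleton, smul_eq_mul] using hg)) (idealOfVars_fg _ _)
  exact mem_span_range_of_forall_mem_pow hw hX n fun f hf ↦ by
    simpa only [Submodule.mem_colon_singleton, smul_eq_mul] using hn hf

end Saturation

section VanishingOnLine

open Matrix

lemma aeval_sub_aeval_mem {σ R S : Type*} [CommRing R] [CommRing S] [Algebra R S] {I : Ideal S}
    {x y : σ → S} (h : ∀ i, x i - y i ∈ I) (f : MvPolynomial σ R) :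
    aeval x f - aeval y f ∈ I := by
  simp_rw [← Ideal.Quotient.mk_eq_mk_iff_sub_mem, ← Ideal.Quotient.mkₐ_eq_mk R I] at h ⊢
  simp_rw [comp_aeval_apply, h]

lemma aeval_smul_of_isHomogeneous {σ R S : Type*} [CommRing R] [CommRing S] [Algebra R S]
    {f : MvPolynomial σ R} {n : ℕ} (hf : f.IsHomogeneous n) (c : S) (x : σ → S) :
    aeval (c • x) f = c ^ n * aeval x f := by
  rw [aeval_def, aeval_def, eval₂_eq, eval₂_eq, Finset.mul_sum]
  refine Finset.sum_congr rfl fun m hm ↦ ?_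
  have hdeg : m.degree = n := by
    rw [Finsupp.degree_eq_weight_one]
    exact hf (mem_support_iff.1 hm)
  simp only [Pi.smul_apply, smul_eq_mul, mul_pow, Finset.prod_mul_distrib,
    Finset.prod_pow_eq_pow_sum, ← Finsupp.degree_apply, hdeg]
  ring

lemma mul_sub_mul_mem_span_range_cross {R : Type*} [CommRing R] (v x : Fin 3 → R)
    (i j : Fin 3) : v i * x j - v j * x i ∈ Ideal.span (Set.range (v ⨯₃ x)) := by
  have hmem (k : Fin 3) : (v ⨯₃ x) k ∈ Ideal.span (Set.range (v ⨯₃ x)) :=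
    Ideal.subset_span ⟨k, rfl⟩
  have h0 := hmem 0
  have h1 := hmem 1
  have h2 := hmem 2
  rw [cross_apply] at h0 h1 h2 ⊢
  simp only [cons_val] at h0 h1 h2
  fin_cases i <;> fin_cases j <;> simp only [Fin.reduceFinMk, sub_self, zero_mem, *] <;>
    rw [← neg_mem_iff, neg_sub] <;> assumption

lemma exists_eq_dotProduct_X_cross {K : Type*} [Field K] {f : MvPolynomial (Fin 3) K} {n : ℕ}
    (hf : f.IsHomogeneous n) {p : Fin 3 → K} (hp : p ≠ 0) (hfp : eval p f = 0) :
    ∃ a : Fin 3 → MvPolynomial (Fin 3) K, f = a ⬝ᵥ (X ⨯₃ (C ∘ p)) := by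
  obtain ⟨k, hk⟩ := Function.ne_iff.1 hp
  -- Modulo the 2 × 2 minors of `(X, p)`, we have `p k ^ n * f = f (p k * X) = f (X k * p) = 0`.
  have hmem : aeval ((C (p k) : MvPolynomial (Fin 3) K) • X) f -
      aeval ((X k : MvPolynomial (Fin 3) K) • (C ∘ p)) f ∈
        Ideal.span (Set.range (X ⨯₃ (C ∘ p))) := by
    refine aeval_sub_aeval_mem (fun i ↦ ?_) f
    simpa [mul_comm] using mul_sub_mul_mem_span_range_cross (X : _ → MvPolynomial _ K) (C ∘ p) i k
  have hzero : aeval (C ∘ p) f = (0 : MvPolynomial (Fin 3) K) := by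
    rw [← algebraMap_eq, aeval_algebraMap_apply, aeval_eq_eval, hfp, map_zero]
  rw [aeval_smul_of_isHomogeneous hf, aeval_smul_of_isHomogeneous hf, aeval_X_left_apply, hzero,
    mul_zero, sub_zero, Ideal.unit_mul_mem_iff_mem] at hmem
  · obtain ⟨a, ha⟩ := mem_span_range_iff_exists_dotProduct.1 hmem
    exact ⟨a, ha.symm⟩
  · exact ((Ne.isUnit hk).map C).pow n

end VanishingOnLine

section Jacobian

open Matrix

/-- The Jacobian matrix at `p` of the family of polynomials `w`, with row index the component of
`w` and column index the variable of differentiation. -/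
def jacobian {ι σ R : Type*} [CommSemiring R] (w : ι → MvPolynomial σ R) (p : σ → R) :
    Matrix ι σ R :=
  of fun i j ↦ eval p (pderiv j (w i))

/-- The matrix of the linear map `v ↦ p ⨯₃ v`. -/
def crossMatrix {R : Type*} [CommRing R] (p : Fin 3 → R) : Matrix (Fin 3) (Fin 3) R :=
  !![0, -p 2, p 1; p 2, 0, -p 0; -p 1, p 0, 0]

/-- Radiality of the 1-form `∑ i, w i dXᵢ` at its singular point `[p]`, in homogeneous coordinates:
the Jacobian matrix of `w` at `p` is a nonzero multiple of `crossMatrix p`. In an affine chart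
centered at `[p]` this says that the linear part of the dual vector field is a nonzero multiple of
the radial vector field, see `isRadialAt_zero_zero_one_iff`. -/
def IsRadialAt {R : Type*} [CommRing R] (w : Fin 3 → MvPolynomial (Fin 3) R) (p : Fin 3 → R) :
    Prop :=
  ∃ c : R, c ≠ 0 ∧ jacobian w p = c • crossMatrix p

variable {R : Type*} [CommRing R]

lemma jacobian_apply {ι σ : Type*} (w : ι → MvPolynomial σ R) (p : σ → R) (i : ι) (j : σ) :
    jacobian w p i j = eval p (pderiv j (w i)) :=
  rfl

lemma sum_X_mul_pderiv_of_X_dotProduct_eq_zero {σ : Type*} [Fintype σ]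
    {w : σ → MvPolynomial σ R} (hX : X ⬝ᵥ w = 0) (i : σ) :
    ∑ j, X j * pderiv i (w j) = -w i := by
  classical
  have h := congrArg (pderiv i) hX
  simp only [dotProduct, map_sum, Derivation.leibniz, smul_eq_mul, pderiv_X, Finset.sum_add_distrib,
    map_zero, Pi.single_apply, mul_ite, mul_one, mul_zero, Finset.sum_ite_eq',
    Finset.mem_univ, if_true] at h
  exact eq_neg_of_add_eq_zero_left h

lemma jacobian_mulVec_self {ι σ : Type*} [Fintype σ] {w : ι → MvPolynomial σ R} {n : ℕ}
    (hw : ∀ i, (w i).IsHomogeneous n) (p : σ → R) :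
    jacobian w p *ᵥ p = n • fun i ↦ eval p (w i) := by
  funext i
  simpa [mulVec, dotProduct, jacobian_apply, mul_comm] using
    congrArg (eval p) (hw i).sum_X_mul_pderiv

lemma vecMul_jacobian_self {σ : Type*} [Fintype σ] {w : σ → MvPolynomial σ R}
    (hX : X ⬝ᵥ w = 0) (p : σ → R) :
    p ᵥ* jacobian w p = -fun i ↦ eval p (w i) := by
  funext i
  simpa [vecMul, dotProduct, jacobian_apply] using
    congrArg (eval p) (sum_X_mul_pderiv_of_X_dotProduct_eq_zero hX i)

lemma crossMatrix_apply (p : Fin 3 → R) (i j : Fin 3) :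
    crossMatrix p i j = (Pi.single i 1 ⨯₃ p) j := by
  fin_cases i <;> fin_cases j <;> simp [crossMatrix, cross_apply]

lemma crossMatrix_transpose (p : Fin 3 → R) : (crossMatrix p)ᵀ = -crossMatrix p := by
  ext i j
  fin_cases i <;> fin_cases j <;> simp [crossMatrix]

lemma IsRadialAt.jacobian_transpose {w : Fin 3 → MvPolynomial (Fin 3) R} {p : Fin 3 → R}
    (h : IsRadialAt w p) : (jacobian w p)ᵀ = -jacobian w p := by
  obtain ⟨c, -, hjac⟩ := h
  rw [hjac, transpose_smul, crossMatrix_transpose, smul_neg]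

lemma transpose_mul_crossMatrix_mul (M : Matrix (Fin 3) (Fin 3) R) (q : Fin 3 → R) :
    Mᵀ * crossMatrix (M *ᵥ q) * M = M.det • crossMatrix q := by
  ext i j
  fin_cases i <;> fin_cases j <;>
    simp [crossMatrix, Matrix.mul_apply, mulVec, dotProduct, Fin.sum_univ_three, det_fin_three] <;>
    ring

lemma isRadialAt_zero_zero_one_iff {w : Fin 3 → MvPolynomial (Fin 3) R} {n : ℕ}
    (hw : ∀ i, (w i).IsHomogeneous n) (hX : X ⬝ᵥ w = 0)
    (hsing : ∀ i, eval ![0, 0, 1] (w i) = 0) :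
    IsRadialAt w ![0, 0, 1] ↔
      eval ![0, 0, 1] (pderiv 0 (w 0)) = 0 ∧ eval ![0, 0, 1] (pderiv 1 (w 1)) = 0 ∧
      eval ![0, 0, 1] (pderiv 1 (w 0)) = -eval ![0, 0, 1] (pderiv 0 (w 1)) ∧
      eval ![0, 0, 1] (pderiv 1 (w 0)) ≠ 0 := by
  have hcol (i : Fin 3) : jacobian w ![0, 0, 1] i 2 = 0 := by
    simpa [hsing, mulVec, dotProduct, Fin.sum_univ_three] using
      congrFun (jacobian_mulVec_self hw ![0, 0, 1]) i
  have hrow (j : Fin 3) : jacobian w ![0, 0, 1] 2 j = 0 := by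
    simpa [hsing, vecMul, dotProduct, Fin.sum_univ_three] using
      congrFun (vecMul_jacobian_self hX ![0, 0, 1]) j
  simp only [← jacobian_apply]
  constructor
  · rintro ⟨c, hc, h⟩
    simp [h, crossMatrix, hc]
  · rintro ⟨h00, h11, h01, hne⟩
    refine ⟨-jacobian w ![0, 0, 1] 0 1, neg_ne_zero.2 hne, ?_⟩
    ext i j
    fin_cases i <;> fin_cases j <;> simp [crossMatrix, hcol, hrow, h00, h11, h01]

end Jacobian

section LocalGenerators

open Matrix

lemma det_mul_dotProduct_mem_span_range_mulVec {n R : Type*} [Fintype n] [DecidableEq n]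
    [CommRing R] (A : Matrix n n R) (a v : n → R) :
    A.det * (a ⬝ᵥ v) ∈ Ideal.span (Set.range (A *ᵥ v)) := by
  refine mem_span_range_iff_exists_dotProduct.2 ⟨a ᵥ* A.adjugate, ?_⟩
  rw [← dotProduct_mulVec, mulVec_mulVec, adjugate_mul, smul_mulVec, one_mulVec, dotProduct_smul,
    smul_eq_mul]

lemma eval_pderiv_dotProduct_X_cross {R : Type*} [CommRing R]
    (a : Fin 3 → MvPolynomial (Fin 3) R) (p : Fin 3 → R) (j : Fin 3) :
    eval p (pderiv j (a ⬝ᵥ (X ⨯₃ (C ∘ p)))) = (p ⨯₃ (eval p ∘ a)) j := by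
  rw [vec3_dotProduct, cross_apply, cross_apply]
  fin_cases j <;> simp [Derivation.leibniz, pderiv_X] <;> ring

variable {K : Type*} [Field K] {w : Fin 3 → MvPolynomial (Fin 3) K} {n : ℕ} {p : Fin 3 → K}

lemma IsRadialAt.exists_mulVec_X_cross_eq (hw : ∀ i, (w i).IsHomogeneous n) (hp : p ≠ 0)
    (hsing : ∀ i, eval p (w i) = 0) (hrad : IsRadialAt w p) :
    ∃ A : Matrix (Fin 3) (Fin 3) (MvPolynomial (Fin 3) K), ∃ c : K, c ≠ 0 ∧
      A *ᵥ (X ⨯₃ (C ∘ p)) = w ∧ A.map (eval p) = c • 1 := by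
  obtain ⟨c, hc, hjac⟩ := hrad
  choose a ha using fun i ↦ exists_eq_dotProduct_X_cross (hw i) hp (hsing i)
  have hparallel (i : Fin 3) : (eval p ∘ a i + c • Pi.single i 1) ⨯₃ p = 0 := by
    have hrow : p ⨯₃ (eval p ∘ a i) = c • (Pi.single i 1 ⨯₃ p) := by
      funext j
      rw [← eval_pderiv_dotProduct_X_cross, ← ha, ← jacobian_apply, hjac, Matrix.smul_apply,
        crossMatrix_apply, Pi.smul_apply]
    rw [LinearMap.map_add₂, LinearMap.map_smul₂, ← hrow, cross_anticomm']
  choose b hb using fun i ↦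
    (IsPrimitiveVector.of_ne_zero hp).exists_eq_smul_of_cross_eq_zero (hparallel i)
  refine ⟨of a - vecMulVec (C ∘ b) (C ∘ p), -c, neg_ne_zero.2 hc, ?_, ?_⟩
  · rw [sub_mulVec, vecMulVec_mulVec, dot_cross_self, MulOpposite.op_zero, zero_smul, sub_zero]
    exact funext fun i ↦ (ha i).symm
  · ext i j
    have h := congrFun (hb i) j
    simp only [Pi.add_apply, Pi.smul_apply, Function.comp_apply, smul_eq_mul] at h
    simp only [map_apply, Matrix.sub_apply, of_apply, vecMulVec_apply, Function.comp_apply, map_sub,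
      map_mul, eval_C, Matrix.smul_apply, smul_eq_mul, one_eq_pi_single]
    linear_combination h

lemma IsRadialAt.exists_mul_mem_span_range (hw : ∀ i, (w i).IsHomogeneous n) (hp : p ≠ 0)
    (hsing : ∀ i, eval p (w i) = 0) (hrad : IsRadialAt w p)
    {f : MvPolynomial (Fin 3) K} {m : ℕ} (hf : f.IsHomogeneous m) (hfp : eval p f = 0) :
    ∃ D, D * f ∈ Ideal.span (Set.range w) ∧ eval p D ≠ 0 := by
  obtain ⟨A, c, hc, hA, hAp⟩ := hrad.exists_mulVec_X_cross_eq hw hp hsing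
  obtain ⟨a, rfl⟩ := exists_eq_dotProduct_X_cross hf hp hfp
  refine ⟨A.det, hA ▸ det_mul_dotProduct_mem_span_range_mulVec A a _, ?_⟩
  rw [RingHom.map_det, RingHom.mapMatrix_apply, hAp]
  simpa using hc

end LocalGenerators

section NonradialSingularity

open Matrix

lemma eq_zero_of_mem_span_range_of_isHomogeneous {ι σ R : Type*} [CommRing R] {d e : ℕ}
    (hde : d < e) {w : ι → MvPolynomial σ R} (hw : ∀ i, (w i).IsHomogeneous e)
    {g : MvPolynomial σ R} (hg : g.IsHomogeneous d) (hgw : g ∈ Ideal.span (Set.range w)) :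
    g = 0 := by
  have hle : Ideal.span (Set.range w) ≤ idealOfVars σ R ^ e := by
    rw [Ideal.span_le]
    rintro _ ⟨i, rfl⟩
    rw [SetLike.mem_coe, mem_pow_idealOfVars_iff']
    exact fun m hm ↦ (hw i).coeff_eq_zero hm.ne
  ext m
  by_cases hm : m.degree = d
  · exact (mem_pow_idealOfVars_iff' _ _).1 (hle hgw) m (hm.trans_lt hde)
  · exact hg.coeff_eq_zero hm

variable {K : Type*} [Field K] {w : Fin 3 → MvPolynomial (Fin 3) K} {d : ℕ}

lemma eq_zero_of_pderiv_add_pderiv_eq_zero (hd : (d : K) ≠ 0)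
    (hw : ∀ i, (w i).IsHomogeneous (d + 1)) (hX : X ⬝ᵥ w = 0)
    (hsymm : ∀ i j, pderiv j (w i) + pderiv i (w j) = 0) : w = 0 := by
  funext i
  have h : ∑ j, X j * (pderiv j (w i) + pderiv i (w j)) = 0 := by simp [hsymm]
  simp only [mul_add, Finset.sum_add_distrib, (hw i).sum_X_mul_pderiv,
    sum_X_mul_pderiv_of_X_dotProduct_eq_zero hX, succ_nsmul, add_neg_cancel_right] at h
  rw [← Nat.cast_smul_eq_nsmul K] at h
  exact (smul_eq_zero.1 h).resolve_left hd

lemma exists_not_isRadialAt [IsAlgClosed K] (hd : (d : K) ≠ 0)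
    (hw : ∀ i, (w i).IsHomogeneous (d + 1)) (hprim : IsPrimitiveVector w) (hX : X ⬝ᵥ w = 0) :
    ∃ p, p ≠ 0 ∧ (∀ i, eval p (w i) = 0) ∧ ¬ IsRadialAt w p := by
  by_contra! hrad
  refine hprim.ne_zero (eq_zero_of_pderiv_add_pderiv_eq_zero hd hw hX fun i j ↦ ?_)
  have hhom : (pderiv j (w i) + pderiv i (w j)).IsHomogeneous d := (hw i).pderiv.add (hw j).pderiv
  refine eq_zero_of_mem_span_range_of_isHomogeneous d.lt_succ_self hw hhom
    (mem_span_range_of_locally_mem hprim hX fun p hp ↦ ?_)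
  by_cases hsing : ∀ i, eval p (w i) = 0
  · refine (hrad p hp hsing).exists_mul_mem_span_range hw hp hsing hhom ?_
    rw [map_add]
    exact eq_neg_iff_add_eq_zero.1 (congrFun₂ (hrad p hp hsing).jacobian_transpose j i)
  · obtain ⟨i, hi⟩ := not_forall.1 hsing
    exact ⟨w i, Ideal.mul_mem_right _ _ (Ideal.subset_span ⟨i, rfl⟩), hi⟩

end NonradialSingularity

section LinearChangeOfCoordinates

open Matrix

variable {n R : Type*} [Fintype n] [CommRing R]

/-- Composition of polynomials with the linear map `M`. -/
def linSubst (M : Matrix n n R) : MvPolynomial n R →ₐ[R] MvPolynomial n R :=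
  aeval fun i ↦ ∑ j, C (M i j) * X j

/-- The coefficients of the pullback under the linear map `M` of the 1-form `∑ i, w i dXᵢ`. -/
def pullbackForm (M : Matrix n n R) (w : n → MvPolynomial n R) : n → MvPolynomial n R :=
  fun i ↦ ∑ k, C (M k i) * linSubst M (w k)

variable (M : Matrix n n R) {w : n → MvPolynomial n R}

lemma linSubst_X (i : n) : linSubst M (X i) = ∑ j, C (M i j) * X j :=
  aeval_X _ i

lemma isHomogeneous_linSubst {f : MvPolynomial n R} {m : ℕ} (hf : f.IsHomogeneous m) :
    (linSubst M f).IsHomogeneous m := by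
  rw [← one_mul m]
  exact hf.aeval _ fun i ↦ .sum _ _ _ fun j _ ↦ (isHomogeneous_X R j).C_mul _

lemma eval_linSubst (f : MvPolynomial n R) (q : n → R) :
    eval q (linSubst M f) = eval (M *ᵥ q) f := by
  simp only [← aeval_eq_eval, linSubst, comp_aeval_apply, map_sum, map_mul, aeval_C, aeval_X]
  rfl

lemma pderiv_linSubst (f : MvPolynomial n R) (j : n) :
    pderiv j (linSubst M f) = ∑ i, C (M i j) * linSubst M (pderiv i f) := by
  classical
  induction f using MvPolynomial.induction_on with
  | C a => simp [← algebraMap_eq]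
  | add f g hf hg => simp [hf, hg, mul_add, Finset.sum_add_distrib]
  | mul_X f i hf =>
    have hXi : pderiv j (linSubst M (X i)) = C (M i j) := by
      simp [linSubst_X, pderiv_X, Pi.single_apply, Derivation.leibniz]
    simp only [map_mul, Derivation.leibniz, smul_eq_mul, map_add, mul_add, Finset.sum_add_distrib,
      hXi, hf, pderiv_X]
    simp [Pi.single_apply, Finset.mul_sum, mul_left_comm, mul_comm]

lemma isHomogeneous_pullbackForm {m : ℕ} (hw : ∀ i, (w i).IsHomogeneous m) (i : n) :
    (pullbackForm M w i).IsHomogeneous m :=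
  .sum _ _ _ fun k _ ↦ (isHomogeneous_linSubst M (hw k)).C_mul _

lemma X_dotProduct_pullbackForm (hX : X ⬝ᵥ w = 0) : X ⬝ᵥ pullbackForm M w = 0 := by
  have h := congrArg (linSubst M) hX
  simp only [dotProduct, map_sum, map_mul, linSubst_X, map_zero, Finset.sum_mul] at h
  rw [Finset.sum_comm] at h
  rw [← h]
  simp only [dotProduct, pullbackForm, Finset.mul_sum]
  exact Finset.sum_congr rfl fun i _ ↦ Finset.sum_congr rfl fun k _ ↦ by ring

lemma eval_pullbackForm (w : n → MvPolynomial n R) (q : n → R) (i : n) :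
    eval q (pullbackForm M w i) = (Mᵀ *ᵥ fun k ↦ eval (M *ᵥ q) (w k)) i := by
  simp [pullbackForm, eval_linSubst, mulVec, dotProduct]

lemma jacobian_pullbackForm (w : n → MvPolynomial n R) (q : n → R) :
    jacobian (pullbackForm M w) q = Mᵀ * jacobian w (M *ᵥ q) * M := by
  ext i j
  simp only [jacobian_apply, pullbackForm, map_sum, Derivation.leibniz, pderiv_C, mul_zero,
    add_zero, smul_eq_mul, pderiv_linSubst, map_mul, eval_C, eval_linSubst, Matrix.mul_apply,
    transpose_apply, Finset.mul_sum, Finset.sum_mul]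
  rw [Finset.sum_comm]
  exact Finset.sum_congr rfl fun _ _ ↦ Finset.sum_congr rfl fun _ _ ↦ by ring

lemma IsRadialAt.of_pullbackForm {K : Type*} [Field K] {w : Fin 3 → MvPolynomial (Fin 3) K}
    {q : Fin 3 → K} {M : Matrix (Fin 3) (Fin 3) K} (hM : M.det ≠ 0)
    (h : IsRadialAt (pullbackForm M w) q) : IsRadialAt w (M *ᵥ q) := by
  obtain ⟨c, hc, hjac⟩ := h
  refine ⟨c / M.det, div_ne_zero hc hM, ?_⟩
  have hunit : IsUnit M := M.isUnit_iff_isUnit_det.2 hM.isUnit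
  refine (M.isUnit_transpose.2 hunit).mul_left_cancel (hunit.mul_right_cancel ?_)
  rw [← jacobian_pullbackForm, hjac, Matrix.mul_smul, Matrix.smul_mul,
    transpose_mul_crossMatrix_mul, smul_smul, div_mul_cancel₀ _ hM]

lemma exists_det_ne_zero_mulVec_eq {n K : Type*} [Fintype n] [DecidableEq n] [Field K]
    {q p : n → K} (hq : q ≠ 0) (hp : p ≠ 0) : ∃ M : Matrix n n K, M.det ≠ 0 ∧ M *ᵥ q = p := by
  obtain ⟨g, hg⟩ := Submodule.exists_linearEquiv_restrict_eq
    ((LinearEquiv.toSpanNonzeroSingleton K _ q hq).symm ≪≫ₗ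
      LinearEquiv.toSpanNonzeroSingleton K _ p hp)
  refine ⟨LinearMap.toMatrix' g, ?_, ?_⟩
  · rw [LinearMap.det_toMatrix']
    exact g.isUnit_det'.ne_zero
  · rw [LinearMap.toMatrix'_mulVec]
    calc g q = LinearEquiv.coord K _ q hq ⟨q, Submodule.mem_span_singleton_self q⟩ • p :=
          (hg ⟨q, _⟩).symm
      _ = p := by rw [LinearEquiv.coord_self, one_smul]

end LinearChangeOfCoordinates

section MainTheorem

open Matrix

theorem exists_nonradial_singularity_general {K : Type*} [Field K] [IsAlgClosed K] {d : ℕ}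
    (hd : (d : K) ≠ 0) {w : Fin 3 → MvPolynomial (Fin 3) K}
    (hw : ∀ i, (w i).IsHomogeneous (d + 1)) (hprim : IsPrimitiveVector w) (hX : X ⬝ᵥ w = 0) :
    ∃ M : Matrix (Fin 3) (Fin 3) K, M.det ≠ 0 ∧
      (∀ i, eval ![0, 0, 1] (pullbackForm M w i) = 0) ∧
      ¬ (eval ![0, 0, 1] (pderiv 0 (pullbackForm M w 0)) = 0 ∧
         eval ![0, 0, 1] (pderiv 1 (pullbackForm M w 1)) = 0 ∧
         eval ![0, 0, 1] (pderiv 1 (pullbackForm M w 0)) =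
           -eval ![0, 0, 1] (pderiv 0 (pullbackForm M w 1)) ∧
         eval ![0, 0, 1] (pderiv 1 (pullbackForm M w 0)) ≠ 0) := by
  obtain ⟨p, hp, hsing, hrad⟩ := exists_not_isRadialAt hd hw hprim hX
  obtain ⟨M, hM, rfl⟩ := exists_det_ne_zero_mulVec_eq (q := ![0, 0, 1]) (by simp) hp
  have hsing' (i : Fin 3) : eval ![0, 0, 1] (pullbackForm M w i) = 0 := by
    simp only [eval_pullbackForm, hsing]
    exact congrFun (mulVec_zero _) i
  refine ⟨M, hM, hsing', fun hchart ↦ hrad (.of_pullbackForm hM ?_)⟩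
  exact (isRadialAt_zero_zero_one_iff (isHomogeneous_pullbackForm M hw)
    (X_dotProduct_pullbackForm M hX) hsing').2 hchart

end MainTheorem

lemma pullbackM_eq_pullbackForm (M : Matrix (Fin 3) (Fin 3) ℂ) (a b c : P3) :
    pullbackM M a b c = pullbackForm M ![a, b, c] := by
  funext i
  rw [pullbackForm, Fin.sum_univ_three]
  rfl

/-- **Every foliation of degree `d ≥ 1` on `ℙ²(ℂ)` has a non-radial singularity.**
After a suitable linear change of coordinates `M`, the point `[0:0:1]` is a singular
point of the pulled-back foliation `M*ω = a′dx + b′dy + c′dz`, and it fails the radiality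
condition `∂a′/∂x = ∂b′/∂y = 0 ∧ ∂a′/∂y = −∂b′/∂x ≠ 0` at `(0,0,1)`. -/
theorem exists_nonradial_singularity
    (d : ℕ) (hd : 1 ≤ d) (a b c : P3) (hfol : IsFoliation d a b c) :
    ∃ M : Matrix (Fin 3) (Fin 3) ℂ, M.det ≠ 0 ∧
      eval ![0, 0, 1] (pullbackM M a b c 0) = 0 ∧
      eval ![0, 0, 1] (pullbackM M a b c 1) = 0 ∧
      ¬ (eval ![0, 0, 1] (pderiv 0 (pullbackM M a b c 0)) = 0 ∧
         eval ![0, 0, 1] (pderiv 1 (pullbackM M a b c 1)) = 0 ∧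
         eval ![0, 0, 1] (pderiv 1 (pullbackM M a b c 0)) =
           -eval ![0, 0, 1] (pderiv 0 (pullbackM M a b c 1)) ∧
         eval ![0, 0, 1] (pderiv 1 (pullbackM M a b c 0)) ≠ 0) := by
  obtain ⟨ha, hb, hc, hprim, heuler⟩ := hfol
  obtain ⟨M, hM, hsing, hrad⟩ := exists_nonradial_singularity_general (K := ℂ) (d := d)
    (w := ![a, b, c]) (Nat.cast_ne_zero.2 (Nat.one_le_iff_ne_zero.1 hd))
    (by simp [Fin.forall_fin_succ, *])
    (fun p hp ↦ hprim p (hp 0) (hp 1) (hp 2)) (by rwa [Matrix.vec3_dotProduct])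
  exact ⟨M, hM, by simpa only [pullbackM_eq_pullbackForm] using ⟨hsing 0, hsing 1, hrad⟩⟩
end
end
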